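/- arXiv:1712.09172 — 11 statements merged into one kernel-verified Lean document; each statement's English description precedes it below -/
import Mathlib

section
/- Let σ ∈ {1, −1} and let f, g : ℝ × ℝ → ℂ be smooth functions such that f(x,t) ≠ 0 for all (x,t) and f satisfies the symmetry f(x,t) = conj(f(−x,t)). Suppose that for all (x,t) ∈ ℝ²: (i) i(∂ₜg(x,t)·f(x,t) − g(x,t)·∂ₜf(x,t)) − (∂ₓ²g(x,t)·f(x,t) − 2∂ₓg(x,t)·∂ₓf(x,t) + g(x,t)·∂ₓ²f(x,t)) = 0, and (ii) 2(∂ₓ²f(x,t)·f(x,t) − (∂ₓf(x,t))²) + 2σ·g(x,t)·conj(g(−x,t)) = 0. Then q(x,t) := g(x,t)/f(x,t) satisfies the nonlocal nonlinear Schrödinger equation i·∂ₜq(x,t) = ∂ₓ²q(x,t) − 2σ·conj(q(−x,t))·q(x,t)² for all (x,t). -/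
open Complex ComplexConjugate

/-!
For `q = g / f` the bilinear operators satisfy `D_t g·f = q_t f²` and
`D_x² g·f = q_xx f² + q D_x² f·f`. Dividing the first bilinear equation by `f²` therefore gives
`i q_t = q_xx + q (D_x² f·f) / f²`, and the second one turns `(D_x² f·f) / f²` into
`-2σ q (h / f)` with `h(x,t) = g*(-x,t)`; the symmetry of `f` identifies `h / f` with `q*(-x,t)`.
-/

open scoped Topology

section Hirota

variable {𝕜 𝕜' : Type*} [NontriviallyNormedField 𝕜] [NontriviallyNormedField 𝕜']
  [NormedAlgebra 𝕜 𝕜'] {u v : 𝕜 → 𝕜'} {x : 𝕜}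

/-- The first-order Hirota bilinear derivative `D u·v = u' v - u v'`, with the dot product of
bilinear notation written as two separate arguments. -/
noncomputable def hirotaDeriv (u v : 𝕜 → 𝕜') (x : 𝕜) : 𝕜' :=
  deriv u x * v x - u x * deriv v x

/-- The second-order Hirota bilinear derivative `D² u·v = u'' v - 2 u' v' + u v''`; it is not the
iterate of `hirotaDeriv`, which returns a single function rather than a pair. -/
noncomputable def hirotaDeriv₂ (u v : 𝕜 → 𝕜') (x : 𝕜) : 𝕜' :=
  deriv (deriv u) x * v x - 2 * deriv u x * deriv v x + u x * deriv (deriv v) x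

theorem hirotaDeriv₂_self (v : 𝕜 → 𝕜') (x : 𝕜) :
    hirotaDeriv₂ v v x = 2 * (deriv (deriv v) x * v x - deriv v x ^ 2) := by
  unfold hirotaDeriv₂
  ring

theorem deriv_div_eq_hirotaDeriv (hu : DifferentiableAt 𝕜 u x) (hv : DifferentiableAt 𝕜 v x)
    (hvx : v x ≠ 0) : deriv (fun y => u y / v y) x = hirotaDeriv u v x / v x ^ 2 :=
  deriv_fun_div hu hv hvx

theorem hasDerivAt_hirotaDeriv (hu : DifferentiableAt 𝕜 u x) (hv : DifferentiableAt 𝕜 v x)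
    (hu' : DifferentiableAt 𝕜 (deriv u) x) (hv' : DifferentiableAt 𝕜 (deriv v) x) :
    HasDerivAt (hirotaDeriv u v) (deriv (deriv u) x * v x - u x * deriv (deriv v) x) x := by
  refine ((hu'.hasDerivAt.fun_mul hv.hasDerivAt).fun_sub
    (hu.hasDerivAt.fun_mul hv'.hasDerivAt)).congr_deriv ?_
  ring

theorem deriv_deriv_div_eq_hirotaDeriv₂ (hu : ∀ᶠ y in 𝓝 x, DifferentiableAt 𝕜 u y)
    (hv : ∀ᶠ y in 𝓝 x, DifferentiableAt 𝕜 v y) (hu' : DifferentiableAt 𝕜 (deriv u) x)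
    (hv' : DifferentiableAt 𝕜 (deriv v) x) (hvx : v x ≠ 0) :
    deriv (deriv fun y => u y / v y) x =
      hirotaDeriv₂ u v x / v x ^ 2 - u x / v x * (hirotaDeriv₂ v v x / v x ^ 2) := by
  have hvd : DifferentiableAt 𝕜 v x := hv.self_of_nhds
  have hfirst : deriv (fun y => u y / v y) =ᶠ[𝓝 x] fun y => hirotaDeriv u v y / v y ^ 2 := by
    filter_upwards [hu, hv, hvd.continuousAt.eventually_ne hvx] with y huy hvy hne
    exact deriv_div_eq_hirotaDeriv huy hvy hne
  have hsecond := (hasDerivAt_hirotaDeriv hu.self_of_nhds hvd hu' hv').fun_div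
    (hvd.hasDerivAt.fun_pow 2) (pow_ne_zero 2 hvx)
  rw [hfirst.deriv_eq, hsecond.deriv]
  unfold hirotaDeriv hirotaDeriv₂
  field_simp
  ring

-- With `r = h / f` this is one equation of the AKNS system for `(q, r)`; the nonlocal equation is
-- the reduction `r(x,t) = q*(-x,t)`.
theorem stmt0_general {f g h : 𝕜 → 𝕜 → 𝕜'} {α σ : 𝕜'} {x t : 𝕜}
    (hfx : ∀ᶠ y in 𝓝 x, DifferentiableAt 𝕜 (f · t) y)
    (hgx : ∀ᶠ y in 𝓝 x, DifferentiableAt 𝕜 (g · t) y)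
    (hfxx : DifferentiableAt 𝕜 (deriv (f · t)) x) (hgxx : DifferentiableAt 𝕜 (deriv (g · t)) x)
    (hft : DifferentiableAt 𝕜 (f x) t) (hgt : DifferentiableAt 𝕜 (g x) t) (hf₀ : f x t ≠ 0)
    (hbil₁ : α * hirotaDeriv (g x) (f x) t - hirotaDeriv₂ (g · t) (f · t) x = 0)
    (hbil₂ : hirotaDeriv₂ (f · t) (f · t) x + 2 * σ * g x t * h x t = 0) :
    α * deriv (fun s => g x s / f x s) t =
      deriv (deriv fun y => g y t / f y t) x - 2 * σ * (h x t / f x t) * (g x t / f x t) ^ 2 := by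
  rw [deriv_div_eq_hirotaDeriv hgt hft hf₀,
    deriv_deriv_div_eq_hirotaDeriv₂ hgx hfx hgxx hfxx hf₀]
  field_simp
  linear_combination f x t * hbil₁ + g x t * hbil₂

end Hirota

/-- If `f, g` are smooth, `f` is nonvanishing and satisfies the nonlocal
symmetry `f(x,t) = conj (f(-x,t))`, and the pair `(f,g)` satisfies the Hirota bilinear
equations `(iD_t - D_x²) g·f = 0` and `D_x² f·f + 2σ g(x,t) g*(-x,t) = 0`, then
`q = g/f` solves the nonlocal NLS equation `i qₜ = q_xx - 2σ q*(-x,t) q²`. -/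
theorem stmt0 (σ : ℝ) (hσ : σ = 1 ∨ σ = -1)
    (f g : ℝ → ℝ → ℂ)
    (hf : ContDiff ℝ (⊤ : ℕ∞) (Function.uncurry f))
    (hg : ContDiff ℝ (⊤ : ℕ∞) (Function.uncurry g))
    (hfne : ∀ x t : ℝ, f x t ≠ 0)
    (hsym : ∀ x t : ℝ, f x t = conj (f (-x) t))
    (hbil1 : ∀ x t : ℝ,
      Complex.I * (deriv (fun t' => g x t') t * f x t - g x t * deriv (fun t' => f x t') t)
        - (deriv (deriv (fun x' => g x' t)) x * f x t
            - 2 * deriv (fun x' => g x' t) x * deriv (fun x' => f x' t) x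
            + g x t * deriv (deriv (fun x' => f x' t)) x) = 0)
    (hbil2 : ∀ x t : ℝ,
      2 * (deriv (deriv (fun x' => f x' t)) x * f x t - (deriv (fun x' => f x' t) x) ^ 2)
        + 2 * (σ : ℂ) * g x t * conj (g (-x) t) = 0) :
    ∀ x t : ℝ,
      Complex.I * deriv (fun t' => g x t' / f x t') t
        = deriv (deriv (fun x' => g x' t / f x' t)) x
          - 2 * (σ : ℂ) * conj (g (-x) t / f (-x) t) * (g x t / f x t) ^ 2 := by
  intro x t
  have hfx : ContDiff ℝ 2 (f · t) := contDiff_infty.1 (hf.comp (contDiff_prodMk_left t)) 2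
  have hgx : ContDiff ℝ 2 (g · t) := contDiff_infty.1 (hg.comp (contDiff_prodMk_left t)) 2
  have hft : ContDiff ℝ (⊤ : ℕ∞) (f x) := hf.comp (contDiff_prodMk_right x)
  have hgt : ContDiff ℝ (⊤ : ℕ∞) (g x) := hg.comp (contDiff_prodMk_right x)
  rw [map_div₀, ← hsym x t]
  exact stmt0_general (h := fun y s => conj (g (-y) s))
    (.of_forall (hfx.differentiable two_ne_zero)) (.of_forall (hgx.differentiable two_ne_zero))
    (hfx.differentiable_deriv_two x) (hgx.differentiable_deriv_two x)
    (hft.differentiable (by simp) t) (hgt.differentiable (by simp) t)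
    (hfne x t) (hbil1 x t) (hirotaDeriv₂_self (f · t) x ▸ hbil2 x t)
end

section
/- Let σ ∈ {1, −1} and let q : ℝ × ℝ → ℂ be a smooth solution of the nonlocal NLS equation i·∂ₜq(x,t) = ∂ₓ²q(x,t) − 2σ·conj(q(−x,t))·q(x,t)². Define r(x,t) := σ·conj(q(−x,t)). Then r satisfies −i·∂ₜr(x,t) = ∂ₓ²r(x,t) − 2·q(x,t)·r(x,t)² for all (x,t); that is, the pair (q, r) solves the AKNS system i qₜ = q_{xx} − 2rq², −i rₜ = r_{xx} − 2qr² under the nonlocal symmetry reduction r(x,t) = σ q*(−x,t). -/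
open Complex ComplexConjugate

/-! Reflecting `x` and conjugating exchanges `q(x,t)` with `conj (q(-x,t))`, turns `i` into `-i`,
and leaves the second space derivative and the real number `σ` unchanged. So `σ` times the conjugate
of the nonlocal NLS equation at `(-x,t)` is the equation for `r` at `(x,t)`. -/

section ReflectedStar

variable {𝕜 𝔸 : Type*} [NontriviallyNormedField 𝕜] [StarRing 𝕜] [TrivialStar 𝕜]
  [NormedDivisionRing 𝔸] [NormedAlgebra 𝕜 𝔸] [StarAddMonoid 𝔸] [StarModule 𝕜 𝔸] [ContinuousStar 𝔸]

theorem deriv_const_mul_star (c : 𝔸) (f : 𝕜 → 𝔸) (x : 𝕜) :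
    deriv (fun y => c * star (f y)) x = c * star (deriv f x) := by
  rw [deriv_const_mul_field, deriv.star]

theorem deriv_const_mul_star_comp_neg (c : 𝔸) (f : 𝕜 → 𝔸) (x : 𝕜) :
    deriv (fun y => c * star (f (-y))) x = -c * star (deriv f (-x)) := by
  rw [deriv_const_mul_star c fun y => f (-y), deriv_comp_neg, star_neg, mul_neg, neg_mul]

theorem deriv_deriv_const_mul_star_comp_neg (c : 𝔸) (f : 𝕜 → 𝔸) (x : 𝕜) :
    deriv (deriv fun y => c * star (f (-y))) x = c * star (deriv (deriv f) (-x)) := by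
  rw [funext (deriv_const_mul_star_comp_neg c f), deriv_const_mul_star_comp_neg, neg_neg]

end ReflectedStar

theorem stmt1_general (σ : ℝ) (q r : ℝ → ℝ → ℂ)
    (hr : ∀ x t : ℝ, r x t = (σ : ℂ) * conj (q (-x) t)) (x t : ℝ)
    (hpde : Complex.I * deriv (fun t' => q (-x) t') t
      = deriv (deriv (fun x' => q x' t)) (-x)
        - 2 * (σ : ℂ) * conj (q x t) * (q (-x) t) ^ 2) :
    - Complex.I * deriv (fun t' => r x t') t
      = deriv (deriv (fun x' => r x' t)) x
        - 2 * q x t * (r x t) ^ 2 := by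
  have r_t : deriv (fun t' => r x t') t = σ * conj (deriv (fun t' => q (-x) t') t) := by
    simpa only [hr, starRingEnd_apply] using deriv_const_mul_star (σ : ℂ) (fun t' => q (-x) t') t
  have r_xx : deriv (deriv (fun x' => r x' t)) x
      = σ * conj (deriv (deriv (fun x' => q x' t)) (-x)) := by
    simpa only [hr, starRingEnd_apply]
      using deriv_deriv_const_mul_star_comp_neg (σ : ℂ) (fun x' => q x' t) x
  have conj_pde : -Complex.I * conj (deriv (fun t' => q (-x) t') t)
      = conj (deriv (deriv (fun x' => q x' t)) (-x))
        - 2 * (σ : ℂ) * q x t * conj (q (-x) t) ^ 2 := by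
    simpa only [map_mul, map_sub, map_pow, map_ofNat, conj_I, conj_ofReal, conj_conj]
      using congrArg conj hpde
  rw [r_t, r_xx, hr]
  linear_combination (σ : ℂ) * conj_pde

/-- If `q` is a smooth solution of the nonlocal NLS equation
`i qₜ = q_xx - 2σ q*(-x,t) q²`, then `r(x,t) := σ conj(q(-x,t))` satisfies the second
AKNS equation `-i rₜ = r_xx - 2 q r²`, i.e. `(q,r)` solves the AKNS system under the
nonlocal symmetry reduction. -/
theorem stmt1 (σ : ℝ) (hσ : σ = 1 ∨ σ = -1)
    (q : ℝ → ℝ → ℂ)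
    (hq : ContDiff ℝ (⊤ : ℕ∞) (Function.uncurry q))
    (hpde : ∀ x t : ℝ,
      Complex.I * deriv (fun t' => q x t') t
        = deriv (deriv (fun x' => q x' t)) x
          - 2 * (σ : ℂ) * conj (q (-x) t) * (q x t) ^ 2)
    (r : ℝ → ℝ → ℂ)
    (hr : ∀ x t : ℝ, r x t = (σ : ℂ) * conj (q (-x) t)) :
    ∀ x t : ℝ,
      - Complex.I * deriv (fun t' => r x t') t
        = deriv (deriv (fun x' => r x' t)) x
          - 2 * q x t * (r x t) ^ 2 := fun x t =>
  stmt1_general σ q r hr x t (by simpa only [neg_neg] using hpde (-x) t)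
end

section
/- Let N ≥ 1 and let pᵢ, p̄ⱼ, qᵢ, q̄ⱼ, ξ_{i0}, ξ̄_{j0}, η_{i0}, η̄_{j0} (1 ≤ i, j ≤ N) be complex constants with pᵢ + p̄ⱼ ≠ 0 and qᵢ + q̄ⱼ ≠ 0 for all i, j. For real variables (x₁, x₂, y₁) set ξᵢ = pᵢx₁ + pᵢ²x₂ + ξ_{i0}, ξ̄ⱼ = p̄ⱼx₁ − p̄ⱼ²x₂ + ξ̄_{j0}, ηᵢ = qᵢy₁ + η_{i0}, η̄ⱼ = q̄ⱼy₁ + η̄_{j0}. Let A be the N×N matrix with entries A_{ij} = e^{ξᵢ+ξ̄ⱼ}/(pᵢ+p̄ⱼ) + e^{ηᵢ+η̄ⱼ}/(qᵢ+q̄ⱼ), let τ₀ = det A, let τ₁ be the determinant of the (N+1)×(N+1) matrix [[A, Φᵀ],[−Ψ̄, 0]] where Φᵢ = e^{ξᵢ} and Ψ̄ⱼ = e^{η̄ⱼ}, and let τ₋₁ be the determinant of [[A, Ψᵀ],[−Φ̄, 0]] where Ψᵢ = e^{ηᵢ} and Φ̄ⱼ = e^{ξ̄ⱼ}. Then for all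 (x₁, x₂, y₁): (∂_{x₁}∂_{y₁}τ₀)·τ₀ − (∂_{x₁}τ₀)·(∂_{y₁}τ₀) = −τ₁·τ₋₁; equivalently the Hirota bilinear equation D_{x₁}D_{y₁}τ₀·τ₀ = −2τ₁τ₋₁ holds. -/
open Complex Matrix

/-- The Gram matrix `A` of the two-component KP hierarchy:
`A_{ij} = e^{ξᵢ+ξ̄ⱼ}/(pᵢ+p̄ⱼ) + e^{ηᵢ+η̄ⱼ}/(qᵢ+q̄ⱼ)` with
`ξᵢ = pᵢx₁ + pᵢ²x₂ + ξ_{i0}`, `ξ̄ⱼ = p̄ⱼx₁ - p̄ⱼ²x₂ + ξ̄_{j0}`,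
`ηᵢ = qᵢy₁ + η_{i0}`, `η̄ⱼ = q̄ⱼy₁ + η̄_{j0}`. -/
noncomputable def gramA (N : ℕ) (p pb q qb ξ0 ξb0 η0 ηb0 : Fin N → ℂ)
    (x₁ x₂ y₁ : ℝ) : Matrix (Fin N) (Fin N) ℂ :=
  Matrix.of fun i j =>
    Complex.exp ((p i * (x₁ : ℂ) + (p i) ^ 2 * (x₂ : ℂ) + ξ0 i)
        + (pb j * (x₁ : ℂ) - (pb j) ^ 2 * (x₂ : ℂ) + ξb0 j)) / (p i + pb j)
      + Complex.exp ((q i * (y₁ : ℂ) + η0 i) + (qb j * (y₁ : ℂ) + ηb0 j)) / (q i + qb j)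

/-- `τ₀ = det A`. -/
noncomputable def tau0 (N : ℕ) (p pb q qb ξ0 ξb0 η0 ηb0 : Fin N → ℂ)
    (x₁ x₂ y₁ : ℝ) : ℂ :=
  (gramA N p pb q qb ξ0 ξb0 η0 ηb0 x₁ x₂ y₁).det

/-- `τ₁ = det [[A, Φᵀ],[−Ψ̄, 0]]` with `Φᵢ = e^{ξᵢ}`, `Ψ̄ⱼ = e^{η̄ⱼ}`. -/
noncomputable def tau1 (N : ℕ) (p pb q qb ξ0 ξb0 η0 ηb0 : Fin N → ℂ)
    (x₁ x₂ y₁ : ℝ) : ℂ :=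
  Matrix.det (Matrix.of fun i j : Fin (N + 1) =>
    if hi : (i : ℕ) < N then
      if hj : (j : ℕ) < N then
        gramA N p pb q qb ξ0 ξb0 η0 ηb0 x₁ x₂ y₁ ⟨i, hi⟩ ⟨j, hj⟩
      else
        Complex.exp (p ⟨i, hi⟩ * (x₁ : ℂ) + (p ⟨i, hi⟩) ^ 2 * (x₂ : ℂ) + ξ0 ⟨i, hi⟩)
    else
      if hj : (j : ℕ) < N then
        -Complex.exp (qb ⟨j, hj⟩ * (y₁ : ℂ) + ηb0 ⟨j, hj⟩)
      else 0)

/-- `τ₋₁ = det [[A, Ψᵀ],[−Φ̄, 0]]` with `Ψᵢ = e^{ηᵢ}`, `Φ̄ⱼ = e^{ξ̄ⱼ}`. -/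
noncomputable def taum1 (N : ℕ) (p pb q qb ξ0 ξb0 η0 ηb0 : Fin N → ℂ)
    (x₁ x₂ y₁ : ℝ) : ℂ :=
  Matrix.det (Matrix.of fun i j : Fin (N + 1) =>
    if hi : (i : ℕ) < N then
      if hj : (j : ℕ) < N then
        gramA N p pb q qb ξ0 ξb0 η0 ηb0 x₁ x₂ y₁ ⟨i, hi⟩ ⟨j, hj⟩
      else
        Complex.exp (q ⟨i, hi⟩ * (y₁ : ℂ) + η0 ⟨i, hi⟩)
    else
      if hj : (j : ℕ) < N then
        -Complex.exp (pb ⟨j, hj⟩ * (x₁ : ℂ) - (pb ⟨j, hj⟩) ^ 2 * (x₂ : ℂ) + ξb0 ⟨j, hj⟩)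
      else 0)

/-! Write `[v, u] = v ⬝ᵥ adj A *ᵥ u`. By the matrix determinant lemma this is both the determinant
of `A` bordered by `u` and `-v` and the derivative of `det A` in a direction `u vᵀ`. The Gram matrix
is designed so that `∂A/∂x₁ = Φ Φ̄ᵀ` and `∂A/∂y₁ = Ψ Ψ̄ᵀ` have rank one: the denominators cancel.
Hence `∂τ₀/∂x₁ = [Φ̄, Φ]`, `∂τ₀/∂y₁ = [Ψ̄, Ψ]`, `τ₁ = [Ψ̄, Φ]`, `τ₋₁ = [Φ̄, Ψ]`, and the bilinear
equation is the expansion of `det A * ∂[Ψ̄, Ψ]/∂x₁` as `[Φ̄, Φ] [Ψ̄, Ψ] - [Ψ̄, Φ] [Φ̄, Ψ]` (Jacobi's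
identity), which is a polynomial form of the Sherman–Morrison formula. -/

section CommRing

variable {n R : Type*} [Fintype n] [DecidableEq n] [CommRing R]

lemma vecMul_adjugate_apply (A : Matrix n n R) (v : n → R) (i : n) :
    (v ᵥ* A.adjugate) i = (A.updateRow i v).det := by
  rw [← mulVec_transpose, adjugate_transpose, ← cramer_eq_adjugate_mulVec, cramer_transpose_apply]

lemma vecMul_adjugate_add_vecMulVec (A : Matrix n n R) (u v : n → R) :
    v ᵥ* (A + vecMulVec u v).adjugate = v ᵥ* A.adjugate := by
  ext i
  simp only [vecMul_adjugate_apply]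
  refine det_eq_of_forall_row_eq_smul_add_const (Function.update u i 0) i (by simp) fun j k => ?_
  obtain rfl | hji := eq_or_ne j i
  · simp
  · simp [hji, vecMulVec_apply]

lemma det_add_vecMulVec_single (A : Matrix n n R) (i : n) (c : R) (v : n → R) :
    (A + vecMulVec (Pi.single i c) v).det = A.det + (v ᵥ* A.adjugate) i * c := by
  have add_eq_updateRow : A + vecMulVec (Pi.single i c) v = A.updateRow i (A i + c • v) := by
    ext j k
    obtain rfl | hji := eq_or_ne j i
    · simp [vecMulVec_apply]
    · simp [hji, vecMulVec_apply]
  rw [add_eq_updateRow, det_updateRow_add, det_updateRow_smul, vecMul_adjugate_apply, mul_comm]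
  simp

lemma det_add_vecMulVec (A : Matrix n n R) (u v : n → R) :
    (A + vecMulVec u v).det = A.det + v ⬝ᵥ A.adjugate *ᵥ u := by
  rw [dotProduct_mulVec]
  induction u using Pi.single_induction generalizing A with
  | zero => simp
  | single i c => rw [det_add_vecMulVec_single, dotProduct_single]
  | add u w hu hw =>
    rw [add_vecMulVec, ← add_assoc, hw, hu, vecMul_adjugate_add_vecMulVec, dotProduct_add,
      add_assoc]

lemma det_smul_adjugate_add_vecMulVec (A : Matrix n n R) (u v : n → R) :
    A.det • (A + vecMulVec u v).adjugate
      = (A + vecMulVec u v).det • A.adjugate - A.adjugate * vecMulVec u v * A.adjugate := by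
  set B := A + vecMulVec u v with hB
  have mul_adjugate_B : A * B.adjugate = B.det • 1 - vecMulVec u v * A.adjugate := by
    rw [eq_sub_iff_add_eq, vecMulVec_mul, ← vecMul_adjugate_add_vecMulVec A u v, ← vecMulVec_mul,
      ← hB, ← add_mul, ← hB, mul_adjugate]
  calc A.det • B.adjugate = A.adjugate * (A * B.adjugate) := by
        rw [← Matrix.mul_assoc, adjugate_mul, smul_mul, Matrix.one_mul]
    _ = _ := by
        rw [mul_adjugate_B, Matrix.mul_sub, Matrix.mul_smul, Matrix.mul_one, Matrix.mul_assoc]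

lemma det_mul_dotProduct_adjugate_add_vecMulVec_mulVec (A : Matrix n n R) (u v w z : n → R) :
    A.det * (z ⬝ᵥ (A + vecMulVec u v).adjugate *ᵥ w)
      = (A + vecMulVec u v).det * (z ⬝ᵥ A.adjugate *ᵥ w)
        - (z ⬝ᵥ A.adjugate *ᵥ u) * (v ⬝ᵥ A.adjugate *ᵥ w) := by
  have h := congrArg (fun M => z ⬝ᵥ M *ᵥ w) (det_smul_adjugate_add_vecMulVec A u v)
  simpa only [sub_mulVec, smul_mulVec, dotProduct_sub, dotProduct_smul, smul_eq_mul,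
    ← mulVec_mulVec, vecMulVec_mulVec, mulVec_smul, op_smul_eq_smul, mul_comm] using h

lemma det_fromBlocks_replicateCol_neg_replicateRow_zero {ι : Type*} [Unique ι]
    [DecidableEq ι] (A : Matrix n n R) (u v : n → R) :
    (fromBlocks A (replicateCol ι u) (-replicateRow ι v) 0).det = v ⬝ᵥ A.adjugate *ᵥ u := by
  set M := fromBlocks A (replicateCol ι u) (-replicateRow ι v) 0 with hM
  have last_row_add : M.updateRow (Sum.inr default) (M (Sum.inr default) + Sum.elim (0 : n → R) 1)
      = fromBlocks A (replicateCol ι u) (-replicateRow ι v) 1 := by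
    ext (i | i) (j | j) <;> simp [hM, updateRow_apply, one_apply, eq_iff_true_of_subsingleton]
  have last_row_unit : M.updateRow (Sum.inr default) (Sum.elim (0 : n → R) 1)
      = fromBlocks A (replicateCol ι u) 0 1 := by
    ext (i | i) (j | j) <;> simp [hM, updateRow_apply, one_apply, eq_iff_true_of_subsingleton]
  have h := congrArg det last_row_add
  rw [det_updateRow_add, updateRow_eq_self, last_row_unit, det_fromBlocks_zero₂₁, det_one, mul_one,
    det_fromBlocks_one₂₂, Matrix.mul_neg, sub_neg_eq_add, ← vecMulVec_eq, det_add_vecMulVec,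
    add_comm] at h
  exact add_left_cancel h

lemma det_bordered {N : ℕ} (A : Matrix (Fin N) (Fin N) R) (u v : Fin N → R) :
    det (of fun i j : Fin (N + 1) =>
      if hi : (i : ℕ) < N then
        if hj : (j : ℕ) < N then A ⟨i, hi⟩ ⟨j, hj⟩ else u ⟨i, hi⟩
      else
        if hj : (j : ℕ) < N then -v ⟨j, hj⟩ else 0) = v ⬝ᵥ A.adjugate *ᵥ u := by
  rw [← det_fromBlocks_replicateCol_neg_replicateRow_zero (ι := Fin 1),
    ← det_submatrix_equiv_self finSumFinEquiv]
  congr 1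
  ext (i | i) (j | j) <;> simp

end CommRing

section Derivative

variable {n 𝕜 R : Type*} [Fintype n] [DecidableEq n] [NontriviallyNormedField 𝕜]
  [NormedCommRing R] [NormedAlgebra 𝕜 R]

lemma hasDerivAt_det {A : 𝕜 → Matrix n n R} {A' : Matrix n n R} {t : 𝕜}
    (hA : ∀ i j, HasDerivAt (fun s => A s i j) (A' i j) t) :
    HasDerivAt (fun s => (A s).det) (trace (A' * (A t).adjugate)) t := by
  let detMultilinear : ContinuousMultilinearMap 𝕜 (fun _ : n => n → R) R :=
    ⟨(detRowAlternating (R := R)).toMultilinearMap.restrictScalars 𝕜,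
      Continuous.matrix_det continuous_id⟩
  have h := (detMultilinear.hasFDerivAt (A t)).comp_hasDerivAt t
    (hasDerivAt_pi.2 fun i => hasDerivAt_pi.2 (hA i))
  convert! h using 1
  exact (Finset.sum_congr rfl fun i _ => vecMul_adjugate_apply (A t) (A' i) i).trans
    (detMultilinear.linearDeriv_apply (A t) A').symm

lemma hasDerivAt_det_of_vecMulVec {A : 𝕜 → Matrix n n R} {u v : n → R} {t : 𝕜}
    (hA : ∀ i j, HasDerivAt (fun s => A s i j) (vecMulVec u v i j) t) :
    HasDerivAt (fun s => (A s).det) (v ⬝ᵥ (A t).adjugate *ᵥ u) t := by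
  simpa only [vecMulVec_mul, trace_vecMulVec, dotProduct_comm u, ← dotProduct_mulVec]
    using hasDerivAt_det hA

lemma hasDerivAt_dotProduct_adjugate_mulVec_of_vecMulVec {A : 𝕜 → Matrix n n R} {u v : n → R}
    {t : 𝕜} (hA : ∀ i j, HasDerivAt (fun s => A s i j) (vecMulVec u v i j) t) (w z : n → R) :
    HasDerivAt (fun s => z ⬝ᵥ (A s).adjugate *ᵥ w)
      (v ⬝ᵥ (A t + vecMulVec w z).adjugate *ᵥ u - v ⬝ᵥ (A t).adjugate *ᵥ u) t := by
  have hA_add : ∀ i j, HasDerivAt (fun s => (A s + vecMulVec w z) i j) (vecMulVec u v i j) t :=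
    fun i j => (hA i j).add_const _
  have h := (hasDerivAt_det_of_vecMulVec hA_add).sub (hasDerivAt_det_of_vecMulVec hA)
  refine h.congr_of_eventuallyEq (.of_forall fun s => ?_)
  simp [det_add_vecMulVec]

theorem deriv_deriv_det_mul_det_sub_of_vecMulVec {A : 𝕜 → 𝕜 → Matrix n n R}
    {φ φb ψ ψb : n → R} {x y : 𝕜}
    (hx : ∀ i j, HasDerivAt (fun s => A s y i j) (vecMulVec φ φb i j) x)
    (hy : ∀ s i j, HasDerivAt (fun t => A s t i j) (vecMulVec ψ ψb i j) y) :
    deriv (fun s => deriv (fun t => (A s t).det) y) x * (A x y).det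
        - deriv (fun s => (A s y).det) x * deriv (fun t => (A x t).det) y
      = -((ψb ⬝ᵥ (A x y).adjugate *ᵥ φ) * (φb ⬝ᵥ (A x y).adjugate *ᵥ ψ)) := by
  have deriv_y : ∀ s, deriv (fun t => (A s t).det) y = ψb ⬝ᵥ (A s y).adjugate *ᵥ ψ :=
    fun s => (hasDerivAt_det_of_vecMulVec (hy s)).deriv
  have deriv_x : deriv (fun s => (A s y).det) x = φb ⬝ᵥ (A x y).adjugate *ᵥ φ :=
    (hasDerivAt_det_of_vecMulVec hx).deriv
  have jacobi := det_mul_dotProduct_adjugate_add_vecMulVec_mulVec (A x y) ψ ψb φ φb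
  rw [det_add_vecMulVec] at jacobi
  simp only [deriv_y, deriv_x,
    (hasDerivAt_dotProduct_adjugate_mulVec_of_vecMulVec hx ψ ψb).deriv]
  linear_combination jacobi

end Derivative

lemma hasDerivAt_cexp_mul_add_div {a : ℂ} (ha : a ≠ 0) (b : ℂ) (t : ℝ) :
    HasDerivAt (fun s : ℝ => exp (a * s + b) / a) (exp (a * t + b)) t := by
  have h := ((((hasDerivAt_id (t : ℂ)).const_mul a).add_const b).cexp.div_const a).comp_ofReal
  simpa [ha] using h

section Gram

variable {N : ℕ}

/-- The vector `Φ` of exponentials `e^{ξᵢ}`, which borders the Gram matrix on the right in `τ₁`. -/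
noncomputable def gramPhi (p ξ0 : Fin N → ℂ) (x₁ x₂ : ℝ) : Fin N → ℂ :=
  fun i => exp (p i * x₁ + p i ^ 2 * x₂ + ξ0 i)

/-- The vector `Φ̄` of exponentials `e^{ξ̄ⱼ}`, which (negated) borders the Gram matrix below in
`τ₋₁`. -/
noncomputable def gramPhiBar (pb ξb0 : Fin N → ℂ) (x₁ x₂ : ℝ) : Fin N → ℂ :=
  fun j => exp (pb j * x₁ - pb j ^ 2 * x₂ + ξb0 j)

/-- The vector `Ψ` of exponentials `e^{ηᵢ}`, which borders the Gram matrix on the right in `τ₋₁`.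
Since `ηᵢ` and `η̄ⱼ` have the same form, `Ψ̄` is `gramPsi qb ηb0`. -/
noncomputable def gramPsi (q η0 : Fin N → ℂ) (y₁ : ℝ) : Fin N → ℂ :=
  fun i => exp (q i * y₁ + η0 i)

variable (p pb q qb ξ0 ξb0 η0 ηb0 : Fin N → ℂ) (x₁ x₂ y₁ : ℝ)

lemma tau1_eq_dotProduct_adjugate_mulVec :
    tau1 N p pb q qb ξ0 ξb0 η0 ηb0 x₁ x₂ y₁
      = gramPsi qb ηb0 y₁ ⬝ᵥ
        (gramA N p pb q qb ξ0 ξb0 η0 ηb0 x₁ x₂ y₁).adjugate *ᵥ gramPhi p ξ0 x₁ x₂ :=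
  det_bordered _ (gramPhi p ξ0 x₁ x₂) (gramPsi qb ηb0 y₁)

lemma taum1_eq_dotProduct_adjugate_mulVec :
    taum1 N p pb q qb ξ0 ξb0 η0 ηb0 x₁ x₂ y₁
      = gramPhiBar pb ξb0 x₁ x₂ ⬝ᵥ
        (gramA N p pb q qb ξ0 ξb0 η0 ηb0 x₁ x₂ y₁).adjugate *ᵥ gramPsi q η0 y₁ :=
  det_bordered _ (gramPsi q η0 y₁) (gramPhiBar pb ξb0 x₁ x₂)

variable {p pb q qb} {i j : Fin N}

lemma hasDerivAt_gramA_x₁ (hp : p i + pb j ≠ 0) :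
    HasDerivAt (fun s => gramA N p pb q qb ξ0 ξb0 η0 ηb0 s x₂ y₁ i j)
      (vecMulVec (gramPhi p ξ0 x₁ x₂) (gramPhiBar pb ξb0 x₁ x₂) i j) x₁ := by
  have exponent_eq : ∀ s : ℝ,
      p i * s + p i ^ 2 * x₂ + ξ0 i + (pb j * s - pb j ^ 2 * x₂ + ξb0 j)
        = (p i + pb j) * s + (p i ^ 2 * x₂ + ξ0 i - pb j ^ 2 * x₂ + ξb0 j) := fun s => by ring
  simp only [gramA, of_apply, vecMulVec_apply, gramPhi, gramPhiBar, ← exp_add, exponent_eq]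
  exact (hasDerivAt_cexp_mul_add_div hp _ x₁).add_const _

lemma hasDerivAt_gramA_y₁ (hq : q i + qb j ≠ 0) :
    HasDerivAt (fun s => gramA N p pb q qb ξ0 ξb0 η0 ηb0 x₁ x₂ s i j)
      (vecMulVec (gramPsi q η0 y₁) (gramPsi qb ηb0 y₁) i j) y₁ := by
  have exponent_eq : ∀ s : ℝ,
      q i * s + η0 i + (qb j * s + ηb0 j) = (q i + qb j) * s + (η0 i + ηb0 j) := fun s => by ring
  simp only [gramA, of_apply, vecMulVec_apply, gramPsi, ← exp_add, exponent_eq]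
  exact (hasDerivAt_cexp_mul_add_div hq _ y₁).const_add _

end Gram

/-- the Gram-type tau functions satisfy the Hirota bilinear equation
`D_{x₁}D_{y₁} τ₀·τ₀ = -2 τ₁ τ₋₁`, written out as
`(∂_{x₁}∂_{y₁}τ₀)τ₀ - (∂_{x₁}τ₀)(∂_{y₁}τ₀) = -τ₁τ₋₁`. -/
theorem stmt3 (N : ℕ) (hN : 1 ≤ N) (p pb q qb ξ0 ξb0 η0 ηb0 : Fin N → ℂ)
    (hp : ∀ i j, p i + pb j ≠ 0) (hq : ∀ i j, q i + qb j ≠ 0) :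
    ∀ x₁ x₂ y₁ : ℝ,
      deriv (fun u => deriv (fun v => tau0 N p pb q qb ξ0 ξb0 η0 ηb0 u x₂ v) y₁) x₁
          * tau0 N p pb q qb ξ0 ξb0 η0 ηb0 x₁ x₂ y₁
        - deriv (fun u => tau0 N p pb q qb ξ0 ξb0 η0 ηb0 u x₂ y₁) x₁
          * deriv (fun v => tau0 N p pb q qb ξ0 ξb0 η0 ηb0 x₁ x₂ v) y₁
      = -(tau1 N p pb q qb ξ0 ξb0 η0 ηb0 x₁ x₂ y₁
          * taum1 N p pb q qb ξ0 ξb0 η0 ηb0 x₁ x₂ y₁) := by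
  intro x₁ x₂ y₁
  rw [tau1_eq_dotProduct_adjugate_mulVec, taum1_eq_dotProduct_adjugate_mulVec]
  exact deriv_deriv_det_mul_det_sub_of_vecMulVec
    (A := fun x y => gramA N p pb q qb ξ0 ξb0 η0 ηb0 x x₂ y)
    (fun i j => hasDerivAt_gramA_x₁ ξ0 ξb0 η0 ηb0 x₁ x₂ y₁ (hp i j))
    (fun s i j => hasDerivAt_gramA_y₁ ξ0 ξb0 η0 ηb0 s x₂ y₁ (hq i j))
end

section
/- Let N ≥ 1 and let pᵢ, p̄ⱼ, ξ_{i0}, ξ̄_{j0}, η_{i0}, η̄_{j0} (1 ≤ i, j ≤ N) be complex constants with pᵢ + p̄ⱼ ≠ 0 for all i, j. Impose the dimension-reduction constraints qᵢ = pᵢ and q̄ⱼ = p̄ⱼ, i.e. for real variables (x₁, x₂, y₁) set ξᵢ = pᵢx₁ + pᵢ²x₂ + ξ_{i0}, ξ̄ⱼ = p̄ⱼx₁ − p̄ⱼ²x₂ + ξ̄_{j0}, ηᵢ = pᵢy₁ + η_{i0}, η̄ⱼ = p̄ⱼy₁ + η̄_{j0}, and let τ₀ = det A with A_{ij} = e^{ξᵢ+ξ̄ⱼ}/(pᵢ+p̄ⱼ)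 + e^{ηᵢ+η̄ⱼ}/(pᵢ+p̄ⱼ). Then for all (x₁, x₂, y₁): ∂_{x₁}τ₀ + ∂_{y₁}τ₀ = (Σ_{j=1}^{N}(pⱼ + p̄ⱼ))·τ₀. In particular the combination ∂_{x₁} + ∂_{y₁} acts on τ₀ only by multiplication by a constant, so y₁ becomes a dummy variable in the Hirota bilinear equations. -/
open Complex Matrix

/-- The reduced Gram tau function `τ₀` of the two-component KP hierarchy with the
dimension-reduction constraints `qᵢ = pᵢ`, `q̄ⱼ = p̄ⱼ` imposed:
`τ₀ = det (e^{ξᵢ+ξ̄ⱼ}/(pᵢ+p̄ⱼ) + e^{ηᵢ+η̄ⱼ}/(pᵢ+p̄ⱼ))` with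
`ξᵢ = pᵢx₁ + pᵢ²x₂ + ξ_{i0}`, `ξ̄ⱼ = p̄ⱼx₁ - p̄ⱼ²x₂ + ξ̄_{j0}`,
`ηᵢ = pᵢy₁ + η_{i0}`, `η̄ⱼ = p̄ⱼy₁ + η̄_{j0}`. -/
noncomputable def tau0red (N : ℕ) (p pb ξ0 ξb0 η0 ηb0 : Fin N → ℂ)
    (x₁ x₂ y₁ : ℝ) : ℂ :=
  Matrix.det (Matrix.of fun i j : Fin N =>
    Complex.exp ((p i * (x₁ : ℂ) + (p i) ^ 2 * (x₂ : ℂ) + ξ0 i)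
        + (pb j * (x₁ : ℂ) - (pb j) ^ 2 * (x₂ : ℂ) + ξb0 j)) / (p i + pb j)
      + Complex.exp ((p i * (y₁ : ℂ) + η0 i) + (pb j * (y₁ : ℂ) + ηb0 j)) / (p i + pb j))

/-! Both `∂_{x₁}` and `∂_{y₁}` act on the corresponding summand of the Gram matrix `A` by
`C ↦ diag(p) C + C diag(p̄)`, so the two partial derivatives of `A` add up to
`diag(p) A + A diag(p̄)`. By Jacobi's formula the sum of the two derivatives of `det A` is
`tr ((diag(p) A + A diag(p̄)) adj A)`, which is `(∑ pⱼ + ∑ p̄ⱼ) det A` because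
`A adj A = adj A A = det A • 1`. -/

section JacobiFormula

variable {n R : Type*} [Fintype n] [DecidableEq n]

theorem sum_det_updateRow_eq_trace_mul_adjugate [CommRing R] (A B : Matrix n n R) :
    ∑ i, (A.updateRow i (B.row i)).det = trace (B * adjugate A) := by
  refine Finset.sum_congr rfl fun i _ => ?_
  rw [← cramer_transpose_apply, cramer_eq_adjugate_mulVec, ← adjugate_transpose,
    mulVec_transpose, diag_apply, mul_apply_eq_vecMul, row]

theorem hasDerivAt_matrix_det {𝕜 : Type*} [NontriviallyNormedField 𝕜] [NormedCommRing R]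
    [NormedAlgebra 𝕜 R] {A : 𝕜 → Matrix n n R} {A' : Matrix n n R} {t : 𝕜}
    (hA : ∀ i j, HasDerivAt (fun u => A u i j) (A' i j) t) :
    HasDerivAt (fun u => (A u).det) (trace (A' * adjugate (A t))) t := by
  let detRows : ContinuousMultilinearMap 𝕜 (fun _ : n => n → R) R :=
    { (detRowAlternating (R := R) (n := n)).toMultilinearMap.restrictScalars 𝕜 with
      cont := continuous_id.matrix_det }
  have hrows : HasDerivAt (fun u i j => A u i j) (fun i j => A' i j) t :=
    hasDerivAt_pi.2 fun i => hasDerivAt_pi.2 (hA i)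
  have hdet := (detRows.hasFDerivAt _).comp_hasDerivAt t hrows
  rw [ContinuousMultilinearMap.linearDeriv_apply] at hdet
  rw [← sum_det_updateRow_eq_trace_mul_adjugate]
  exact hdet

end JacobiFormula

theorem trace_mul_add_mul_mul_adjugate {n R : Type*} [Fintype n] [DecidableEq n] [CommRing R]
    (D E A : Matrix n n R) :
    trace ((D * A + A * E) * adjugate A) = (trace D + trace E) * A.det := by
  have hD : trace (D * A * adjugate A) = A.det * trace D := by
    rw [Matrix.mul_assoc, mul_adjugate, Matrix.mul_smul, Matrix.mul_one, trace_smul, smul_eq_mul]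
  have hE : trace (A * E * adjugate A) = A.det * trace E := by
    rw [trace_mul_cycle, adjugate_mul, Matrix.smul_mul, Matrix.one_mul, trace_smul, smul_eq_mul]
  rw [Matrix.add_mul, trace_add, hD, hE]
  ring

section ExpCauchyMatrix

variable {m n : Type*}

/-- The Cauchy matrix `1 / (pᵢ + qⱼ)` dressed by the exponentials of the phases `pᵢ z + aᵢ` and
`qⱼ z + bⱼ`. Each of the two components of the KP hierarchy contributes one such summand to the
Gram matrix; `a` and `b` absorb everything in the phases that does not depend on the variable `z`
being differentiated. Entries with `pᵢ + qⱼ = 0` take the junk value `0`. -/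
noncomputable def expCauchyMatrix (p a : m → ℂ) (q b : n → ℂ) (z : ℂ) : Matrix m n ℂ :=
  of fun i j => exp ((p i * z + a i) + (q j * z + b j)) / (p i + q j)

theorem hasDerivAt_expCauchyMatrix_apply [Fintype m] [Fintype n] [DecidableEq m] [DecidableEq n]
    (p a : m → ℂ) (q b : n → ℂ) (z : ℂ) (i : m) (j : n) :
    HasDerivAt (fun w => expCauchyMatrix p a q b w i j)
      ((diagonal p * expCauchyMatrix p a q b z + expCauchyMatrix p a q b z * diagonal q) i j)
      z := by
  have hphase : HasDerivAt (fun w => (p i * w + a i) + (q j * w + b j)) (p i + q j) z :=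
    ((hasDerivAt_const_mul (p i)).add_const (a i)).add
      ((hasDerivAt_const_mul (q j)).add_const (b j))
  refine (hphase.cexp.div_const (p i + q j)).congr_deriv ?_
  simp only [expCauchyMatrix, Matrix.add_apply, diagonal_mul, mul_diagonal, of_apply]
  ring

end ExpCauchyMatrix

theorem tau0red_eq_det_expCauchyMatrix_add {N : ℕ} (p pb ξ0 ξb0 η0 ηb0 : Fin N → ℂ)
    (x₁ x₂ y₁ : ℝ) :
    tau0red N p pb ξ0 ξb0 η0 ηb0 x₁ x₂ y₁ =
      (expCauchyMatrix p (fun i => p i ^ 2 * x₂ + ξ0 i) pb (fun j => -(pb j ^ 2 * x₂) + ξb0 j) x₁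
        + expCauchyMatrix p η0 pb ηb0 y₁).det := by
  unfold tau0red
  congr 1
  ext i j
  simp only [expCauchyMatrix, Matrix.add_apply, of_apply, sub_eq_add_neg, add_assoc]

/-- under the dimension reduction `qᵢ = pᵢ`, `q̄ⱼ = p̄ⱼ`, the reduced
Gram tau function satisfies `∂_{x₁}τ₀ + ∂_{y₁}τ₀ = (Σⱼ (pⱼ+p̄ⱼ)) τ₀`, so that
`∂_{x₁} + ∂_{y₁}` acts on `τ₀` only by multiplication by a constant. -/
theorem stmt5 (N : ℕ) (hN : 1 ≤ N) (p pb ξ0 ξb0 η0 ηb0 : Fin N → ℂ)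
    (hp : ∀ i j, p i + pb j ≠ 0) :
    ∀ x₁ x₂ y₁ : ℝ,
      deriv (fun u => tau0red N p pb ξ0 ξb0 η0 ηb0 u x₂ y₁) x₁
        + deriv (fun v => tau0red N p pb ξ0 ξb0 η0 ηb0 x₁ x₂ v) y₁
      = (∑ j : Fin N, (p j + pb j)) * tau0red N p pb ξ0 ξb0 η0 ηb0 x₁ x₂ y₁ := by
  intro x₁ x₂ y₁
  simp only [tau0red_eq_det_expCauchyMatrix_add]
  set X := expCauchyMatrix p (fun i => p i ^ 2 * x₂ + ξ0 i) pb
    (fun j => -(pb j ^ 2 * x₂) + ξb0 j)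
  set Y := expCauchyMatrix p η0 pb ηb0
  set D := diagonal p
  set E := diagonal pb
  have hX : HasDerivAt (fun u : ℝ => (X u + Y y₁).det)
      (trace ((D * X x₁ + X x₁ * E) * adjugate (X x₁ + Y y₁))) x₁ :=
    (hasDerivAt_matrix_det fun i j =>
      (hasDerivAt_expCauchyMatrix_apply ..).add_const (Y y₁ i j)).comp_ofReal
  have hY : HasDerivAt (fun v : ℝ => (X x₁ + Y v).det)
      (trace ((D * Y y₁ + Y y₁ * E) * adjugate (X x₁ + Y y₁))) y₁ :=
    (hasDerivAt_matrix_det fun i j =>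
      (hasDerivAt_expCauchyMatrix_apply ..).const_add (X x₁ i j)).comp_ofReal
  have hsum : (D * X x₁ + X x₁ * E) + (D * Y y₁ + Y y₁ * E) =
      D * (X x₁ + Y y₁) + (X x₁ + Y y₁) * E := by
    rw [Matrix.mul_add, Matrix.add_mul, add_add_add_comm]
  rw [hX.deriv, hY.deriv, ← trace_add, ← Matrix.add_mul, hsum, trace_mul_add_mul_mul_adjugate,
    trace_diagonal, trace_diagonal, Finset.sum_add_distrib]
end

section
/- Let N ≥ 1, let p₁,…,p_N and p̄₁,…,p̄_N be real numbers with pᵢ + p̄ⱼ ≠ 0 for all i, j, and let θ₁,…,θ_N and θ̄₁,…,θ̄_N be real numbers. For (x,t) ∈ ℝ² define the N×N matrix A(x,t) with entries A_{ij}(x,t) = (1/(pᵢ+p̄ⱼ))·(exp((pᵢ+p̄ⱼ)x − i(pᵢ² − p̄ⱼ²)t) + exp(i(θᵢ + θ̄ⱼ))) and set τ₀(x,t) = det A(x,t). Then for all (x,t): τ₀(x,t) = C(x,t)·conj(τ₀(−x,t)), where C(x,t) = Π_{j=1}^{N} exp((pⱼ+p̄ⱼ)x − i(pⱼ² − p̄ⱼ²)t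 + i(θⱼ + θ̄ⱼ)). -/
open Complex Matrix ComplexConjugate

/-- The reduced Gram tau function `τ₀(x,t) = det A(x,t)` with
`A_{ij} = (1/(pᵢ+p̄ⱼ))(e^{(pᵢ+p̄ⱼ)x - i(pᵢ²-p̄ⱼ²)t} + e^{i(θᵢ+θ̄ⱼ)})`
for real wave numbers `pᵢ, p̄ⱼ` and real phases `θᵢ, θ̄ⱼ`. -/
noncomputable def tau0xt (N : ℕ) (p pb θ θb : Fin N → ℝ) (x t : ℝ) : ℂ :=
  Matrix.det (Matrix.of fun i j : Fin N =>
    (1 / ((p i : ℂ) + (pb j : ℂ)))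
      * (Complex.exp (((p i : ℂ) + (pb j : ℂ)) * (x : ℂ)
            - Complex.I * ((p i : ℂ) ^ 2 - (pb j : ℂ) ^ 2) * (t : ℂ))
          + Complex.exp (Complex.I * ((θ i : ℂ) + (θb j : ℂ)))))

/-- The gauge factor `C(x,t) = Πⱼ e^{(pⱼ+p̄ⱼ)x - i(pⱼ²-p̄ⱼ²)t + i(θⱼ+θ̄ⱼ)}`. -/
noncomputable def gaugeC (N : ℕ) (p pb θ θb : Fin N → ℝ) (x t : ℝ) : ℂ :=
  ∏ j : Fin N,
    Complex.exp (((p j : ℂ) + (pb j : ℂ)) * (x : ℂ)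
      - Complex.I * ((p j : ℂ) ^ 2 - (pb j : ℂ) ^ 2) * (t : ℂ)
      + Complex.I * ((θ j : ℂ) + (θb j : ℂ)))

/-!
Each exponential in the matrix `A` splits into a factor depending on the row and a factor depending
on the column, so `A` is the Hadamard product of a real Cauchy matrix with a sum of two rank-one
matrices. The substitution `x ↦ -x` followed by complex conjugation inverts every one of these
factors. Since `(u v)⁻¹ + (a b)⁻¹ = (u v + a b) / (u v a b)`, inverting the factors only rescales
the rows and columns, and `C` is the product of the scaling factors.
-/

section GramMatrix

variable {m n R S : Type*}

section Semiring

variable [Semiring R] [Semiring S]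

/-- The matrix with entries `cᵢⱼ (uᵢ vⱼ + aᵢ bⱼ)`. It abstracts the matrix of the Gram tau function:
`c` is the Cauchy kernel, `u v` the exponentials in `x` and `t`, and `a b` the constant phases. -/
def gramMatrix (c : Matrix m n R) (u : m → R) (v : n → R) (a : m → R) (b : n → R) :
    Matrix m n R :=
  c ⊙ (vecMulVec u v + vecMulVec a b)

theorem gramMatrix_apply (c : Matrix m n R) (u : m → R) (v : n → R) (a : m → R) (b : n → R)
    (i : m) (j : n) :
    gramMatrix c u v a b i j = c i j * (u i * v j + a i * b j) :=
  rfl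

theorem map_gramMatrix (φ : R →+* S) (c : Matrix m n R) (u : m → R) (v : n → R) (a : m → R)
    (b : n → R) :
    (gramMatrix c u v a b).map φ = gramMatrix (c.map φ) (φ ∘ u) (φ ∘ v) (φ ∘ a) (φ ∘ b) := by
  ext i j
  simp only [map_apply, gramMatrix_apply, map_mul, map_add, Function.comp_apply]

end Semiring

theorem gramMatrix_eq_diagonal_mul_mul_diagonal [CommSemiring R] [Fintype m] [DecidableEq m]
    [Fintype n] [DecidableEq n] (c : Matrix m n R) {u u' a a' : m → R} {v v' b b' : n → R}
    (hu : u * u' = 1) (hv : v * v' = 1) (ha : a * a' = 1) (hb : b * b' = 1) :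
    gramMatrix c u v a b = diagonal (u * a) * gramMatrix c u' v' a' b' * diagonal (v * b) := by
  ext i j
  have hui : u i * u' i = 1 := congrFun hu i
  have hvj : v j * v' j = 1 := congrFun hv j
  have hai : a i * a' i = 1 := congrFun ha i
  have hbj : b j * b' j = 1 := congrFun hb j
  simp only [mul_diagonal, diagonal_mul, gramMatrix_apply, Pi.mul_apply]
  calc c i j * (u i * v j + a i * b j)
      = c i j * ((u i * v j) * ((a i * a' i) * (b j * b' j))
          + (a i * b j) * ((u i * u' i) * (v j * v' j))) := by
        rw [hui, hvj, hai, hbj]; ring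
    _ = u i * a i * (c i j * (u' i * v' j + a' i * b' j)) * (v j * b j) := by ring

theorem det_gramMatrix_eq_prod_mul_det [CommRing R] [Fintype n] [DecidableEq n]
    (c : Matrix n n R) {u u' v v' a a' b b' : n → R} (hu : u * u' = 1) (hv : v * v' = 1)
    (ha : a * a' = 1) (hb : b * b' = 1) :
    (gramMatrix c u v a b).det
      = (∏ j, u j * v j * (a j * b j)) * (gramMatrix c u' v' a' b').det := by
  rw [gramMatrix_eq_diagonal_mul_mul_diagonal c hu hv ha hb, det_mul, det_mul, det_diagonal,
    det_diagonal, mul_right_comm, ← Finset.prod_mul_distrib]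
  simp only [Pi.mul_apply, mul_mul_mul_comm]

end GramMatrix

/-- The Cauchy matrix of real wave numbers, viewed over `ℂ`: the constant kernel `1 / (pᵢ + qⱼ)` of
the Gram tau function. Where `pᵢ + qⱼ = 0` the entry is the junk value `0`. -/
noncomputable def cauchyKernel {m n : Type*} (p : m → ℝ) (q : n → ℝ) : Matrix m n ℂ :=
  of fun i j => ((p i + q j)⁻¹ : ℝ)

theorem map_conj_cauchyKernel {m n : Type*} (p : m → ℝ) (q : n → ℝ) :
    (cauchyKernel p q).map conj = cauchyKernel p q := by
  ext i j
  exact conj_ofReal _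

/-- The exponential solution `f = e^{kx - ik²t}` of `i f_t = f_xx`, the factor contributed to the
Gram tau function by a row with wave number `k`. A column with wave number `k` contributes
`expWave k x (-t)`. -/
noncomputable def expWave (k x t : ℝ) : ℂ :=
  exp (k * x - I * k ^ 2 * t)

theorem expWave_mul_conj_expWave_neg (k x t : ℝ) :
    expWave k x t * conj (expWave k (-x) t) = 1 := by
  rw [expWave, expWave, ← exp_conj, ← exp_add, ← exp_zero]
  congr 1
  simp only [map_sub, map_mul, map_pow, map_neg, conj_ofReal, conj_I, ofReal_neg]
  ring

theorem exp_I_mul_ofReal_mul_conj (θ : ℝ) : exp (I * θ) * conj (exp (I * θ)) = 1 := by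
  simp only [← exp_conj, ← exp_add, map_mul, conj_I, conj_ofReal, neg_mul, add_neg_cancel,
    exp_zero]

theorem exp_sub_eq_expWave_mul_expWave (k l x t : ℝ) :
    exp (((k : ℂ) + l) * x - I * ((k : ℂ) ^ 2 - (l : ℂ) ^ 2) * t)
      = expWave k x t * expWave l x (-t) := by
  rw [expWave, expWave, ← exp_add, ofReal_neg]
  congr 1
  ring

theorem tau0xt_eq_det_gramMatrix (N : ℕ) (p pb θ θb : Fin N → ℝ) (x t : ℝ) :
    tau0xt N p pb θ θb x t
      = (gramMatrix (cauchyKernel p pb) (fun i => expWave (p i) x t)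
          (fun j => expWave (pb j) x (-t)) (fun i => exp (I * θ i))
          (fun j => exp (I * θb j))).det := by
  rw [tau0xt]
  congr 1
  ext i j
  rw [of_apply, gramMatrix_apply, exp_sub_eq_expWave_mul_expWave, mul_add I, exp_add,
    cauchyKernel, of_apply, ofReal_inv, ofReal_add, one_div]

theorem gaugeC_eq_prod_expWave (N : ℕ) (p pb θ θb : Fin N → ℝ) (x t : ℝ) :
    gaugeC N p pb θ θb x t
      = ∏ j, expWave (p j) x t * expWave (pb j) x (-t) * (exp (I * θ j) * exp (I * θb j)) := by
  simp only [gaugeC, exp_add, exp_sub_eq_expWave_mul_expWave, mul_add I]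

/-- Lemma 1, first relation, real wave numbers: for all `(x,t)`,
`τ₀(x,t) = C(x,t) conj(τ₀(-x,t))`. -/
theorem stmt6 (N : ℕ) (hN : 1 ≤ N) (p pb θ θb : Fin N → ℝ)
    (hp : ∀ i j, p i + pb j ≠ 0) :
    ∀ x t : ℝ,
      tau0xt N p pb θ θb x t
        = gaugeC N p pb θ θb x t * conj (tau0xt N p pb θ θb (-x) t) := by
  intro x t
  rw [tau0xt_eq_det_gramMatrix, tau0xt_eq_det_gramMatrix, gaugeC_eq_prod_expWave,
    RingHom.map_det, RingHom.mapMatrix_apply, map_gramMatrix, map_conj_cauchyKernel]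
  apply det_gramMatrix_eq_prod_mul_det <;> funext j
  · exact expWave_mul_conj_expWave_neg (p j) x t
  · exact expWave_mul_conj_expWave_neg (pb j) x (-t)
  · exact exp_I_mul_ofReal_mul_conj (θ j)
  · exact exp_I_mul_ofReal_mul_conj (θb j)
end

section
/- Let N ≥ 1, let p₁,…,p_{2N} be real numbers and θ₁,…,θ_{2N} be real numbers. For (x,t) ∈ ℝ² define the 2N×2N double Wronskian matrix W(x,t) whose i-th row is (e^{ξᵢ}, pᵢe^{ξᵢ}, …, pᵢ^{N−1}e^{ξᵢ}, e^{−iθᵢ}, pᵢe^{−iθᵢ}, …, pᵢ^{N−1}e^{−iθᵢ}) with ξᵢ = ξᵢ(x,t) = pᵢx − i pᵢ² t, and set τ_{N,N}(x,t) = det W(x,t). Then for all (x,t): τ_{N,N}(x,t) = (−1)^N · C′(x,t) · conj(τ_{N,N}(−x,t)), where C′(x,t) = Π_{i=1}^{2N} exp(pᵢx − i pᵢ² t − i θᵢ). -/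
open Complex Matrix ComplexConjugate

/-- The double Wronskian tau function `τ_{N,N}(x,t)`: the determinant of the
`2N×2N` matrix whose `i`-th row is
`(e^{ξᵢ}, pᵢe^{ξᵢ}, …, pᵢ^{N-1}e^{ξᵢ}, e^{-iθᵢ}, pᵢe^{-iθᵢ}, …, pᵢ^{N-1}e^{-iθᵢ})`
with `ξᵢ = pᵢx - ipᵢ²t`, for real `pᵢ, θᵢ`, `1 ≤ i ≤ 2N`. -/
noncomputable def tauNN (N : ℕ) (p θ : Fin (N + N) → ℝ) (x t : ℝ) : ℂ :=
  Matrix.det (Matrix.of fun i j : Fin (N + N) =>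
    if (j : ℕ) < N then
      (p i : ℂ) ^ (j : ℕ)
        * Complex.exp ((p i : ℂ) * (x : ℂ) - Complex.I * (p i : ℂ) ^ 2 * (t : ℂ))
    else
      (p i : ℂ) ^ ((j : ℕ) - N) * Complex.exp (-(Complex.I * (θ i : ℂ))))

/-- The gauge factor `C′(x,t) = Π_{i=1}^{2N} e^{pᵢx - ipᵢ²t - iθᵢ}`. -/
noncomputable def gaugeC' (N : ℕ) (p θ : Fin (N + N) → ℝ) (x t : ℝ) : ℂ :=
  ∏ i : Fin (N + N),
    Complex.exp ((p i : ℂ) * (x : ℂ) - Complex.I * (p i : ℂ) ^ 2 * (t : ℂ)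
      - Complex.I * (θ i : ℂ))

/-!
For real `pᵢ, θᵢ`, complex conjugation together with `x ↦ -x` sends `e^{ξᵢ}` to `e^{-ξᵢ}` and
`e^{-iθᵢ}` to `e^{iθᵢ}`. Multiplying the `i`-th row of the conjugated matrix by `e^{ξᵢ - iθᵢ}` then
restores the two original amplitudes with the two column blocks interchanged, and interchanging two
blocks of `N` columns is a product of `N` transpositions.
-/

theorem sign_sumComm_self (α : Type*) [Fintype α] [DecidableEq α] :
    Equiv.Perm.sign (Equiv.sumComm α α) = (-1) ^ Fintype.card α := by
  have h : (Equiv.boolProdEquivSum α).permCongr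
      (Equiv.prodCongrLeft fun _ => Equiv.swap false true) = Equiv.sumComm α α := by
    ext (a | a) <;> simp
  rw [← h, Equiv.Perm.sign_permCongr, Equiv.Perm.sign_prodCongrLeft]
  simp

theorem sign_finAddFlip_self (n : ℕ) :
    Equiv.Perm.sign (finAddFlip : Fin (n + n) ≃ Fin (n + n)) = (-1) ^ n := by
  have h : (finAddFlip : Fin (n + n) ≃ Fin (n + n)) =
      finSumFinEquiv.permCongr (Equiv.sumComm (Fin n) (Fin n)) := rfl
  rw [h, Equiv.Perm.sign_permCongr, sign_sumComm_self, Fintype.card_fin]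

section DoubleVandermonde

variable {ι R : Type*} [CommRing R]

/-- The double Vandermonde matrix with nodes `p` and amplitudes `a, b`: its `i`-th row is
`(aᵢ, pᵢaᵢ, …, pᵢ^{N-1}aᵢ, bᵢ, pᵢbᵢ, …, pᵢ^{M-1}bᵢ)`. A double Wronskian of exponentials
`∂ⁿe^{ξᵢ} = pᵢⁿe^{ξᵢ}` is the determinant of such a matrix. -/
def doubleVandermonde (N M : ℕ) (p a b : ι → R) : Matrix ι (Fin (N + M)) R :=
  Matrix.of fun i => Fin.append (fun j : Fin N => p i ^ (j : ℕ) * a i)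
    (fun j : Fin M => p i ^ (j : ℕ) * b i)

variable {N M : ℕ}

theorem doubleVandermonde_castAdd (p a b : ι → R) (i : ι) (j : Fin N) :
    doubleVandermonde N M p a b i (Fin.castAdd M j) = p i ^ (j : ℕ) * a i := by
  rw [doubleVandermonde, Matrix.of_apply, Fin.append_left]

theorem doubleVandermonde_natAdd (p a b : ι → R) (i : ι) (j : Fin M) :
    doubleVandermonde N M p a b i (Fin.natAdd N j) = p i ^ (j : ℕ) * b i := by
  rw [doubleVandermonde, Matrix.of_apply, Fin.append_right]

theorem doubleVandermonde_map {S : Type*} [CommRing S] (f : R →+* S) (p a b : ι → R) :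
    (doubleVandermonde N M p a b).map f = doubleVandermonde N M (f ∘ p) (f ∘ a) (f ∘ b) := by
  ext i j
  cases j using Fin.addCases <;>
    simp only [Matrix.map_apply, doubleVandermonde_castAdd, doubleVandermonde_natAdd,
      Function.comp_apply, map_mul, map_pow]

theorem doubleVandermonde_mul_mul [Fintype ι] [DecidableEq ι] (p c a b : ι → R) :
    doubleVandermonde N M p (c * a) (c * b) =
      Matrix.diagonal c * doubleVandermonde N M p a b := by
  ext i j
  cases j using Fin.addCases <;>
    simp only [Matrix.diagonal_mul, doubleVandermonde_castAdd, doubleVandermonde_natAdd,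
      Pi.mul_apply, mul_left_comm]

theorem doubleVandermonde_submatrix_finAddFlip (p a b : ι → R) :
    (doubleVandermonde N M p a b).submatrix id finAddFlip = doubleVandermonde M N p b a := by
  ext i j
  cases j using Fin.addCases <;>
    simp only [Matrix.submatrix_apply, id_eq, finAddFlip_apply_castAdd, finAddFlip_apply_natAdd,
      doubleVandermonde_castAdd, doubleVandermonde_natAdd]

theorem det_doubleVandermonde_mul_mul (p c a b : Fin (N + M) → R) :
    (doubleVandermonde N M p (c * a) (c * b)).det =
      (∏ i, c i) * (doubleVandermonde N M p a b).det := by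
  rw [doubleVandermonde_mul_mul, Matrix.det_mul, Matrix.det_diagonal]

theorem det_doubleVandermonde_swap (p a b : Fin (N + N) → R) :
    (doubleVandermonde N N p b a).det = (-1) ^ N * (doubleVandermonde N N p a b).det := by
  rw [← doubleVandermonde_submatrix_finAddFlip, Matrix.det_permute', sign_finAddFlip_self]
  push_cast
  rfl

end DoubleVandermonde

section Tau

/-- The phase `ξ = px - ip²t` of a wave with real wave number `p`. -/
noncomputable def phase (p x t : ℝ) : ℂ :=
  p * x - I * p ^ 2 * t

theorem conj_phase_neg (p x t : ℝ) : conj (phase p (-x) t) = -phase p x t := by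
  simp only [phase, map_sub, map_mul, map_pow, conj_ofReal, map_neg, conj_I, ofReal_neg]
  ring

variable (N : ℕ) (p θ : Fin (N + N) → ℝ) (x t : ℝ)

theorem tauNN_eq_det_doubleVandermonde :
    tauNN N p θ x t = (doubleVandermonde N N (fun i => (p i : ℂ))
      (fun i => exp (phase (p i) x t)) (fun i => exp (-(I * θ i)))).det := by
  rw [tauNN]
  congr 1
  ext i j
  cases j using Fin.addCases with
  | left j => simp [doubleVandermonde_castAdd, phase]
  | right j => simp [doubleVandermonde_natAdd, -Fin.natAdd_eq_addNat]

theorem conj_tauNN_neg :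
    conj (tauNN N p θ (-x) t) = (doubleVandermonde N N (fun i => (p i : ℂ))
      (fun i => exp (-phase (p i) x t)) (fun i => exp (I * θ i))).det := by
  rw [tauNN_eq_det_doubleVandermonde, RingHom.map_det, RingHom.mapMatrix_apply,
    doubleVandermonde_map]
  simp only [Function.comp_def, conj_ofReal, ← exp_conj, conj_phase_neg, map_neg, map_mul, conj_I,
    neg_mul, neg_neg]

end Tau

/-- Lemma 2, first relation, real wave numbers: for all `(x,t)`,
`τ_{N,N}(x,t) = (-1)^N C′(x,t) conj(τ_{N,N}(-x,t))`. -/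
theorem stmt8 (N : ℕ) (hN : 1 ≤ N) (p θ : Fin (N + N) → ℝ) :
    ∀ x t : ℝ,
      tauNN N p θ x t
        = (-1 : ℂ) ^ N * gaugeC' N p θ x t * conj (tauNN N p θ (-x) t) := by
  intro x t
  let q : Fin (N + N) → ℂ := fun i => p i
  let ξ : Fin (N + N) → ℂ := fun i => phase (p i) x t
  let η : Fin (N + N) → ℂ := fun i => I * θ i
  let c : Fin (N + N) → ℂ := fun i => exp (ξ i - η i)
  have hc : gaugeC' N p θ x t = ∏ i, c i := rfl
  have hξ : (fun i => exp (ξ i)) = c * fun i => exp (η i) := by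
    ext i
    simp only [c, Pi.mul_apply, ← exp_add, sub_add_cancel]
  have hη : (fun i => exp (-η i)) = c * fun i => exp (-ξ i) := by
    ext i
    simp only [c, Pi.mul_apply, ← exp_add, sub_add_eq_add_sub, add_neg_cancel, zero_sub]
  calc tauNN N p θ x t
      = (doubleVandermonde N N q (fun i => exp (ξ i)) (fun i => exp (-η i))).det :=
        tauNN_eq_det_doubleVandermonde N p θ x t
    _ = (∏ i, c i) *
          (doubleVandermonde N N q (fun i => exp (η i)) (fun i => exp (-ξ i))).det := by
        rw [hξ, hη, det_doubleVandermonde_mul_mul]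
    _ = gaugeC' N p θ x t * ((-1) ^ N * conj (tauNN N p θ (-x) t)) := by
        rw [hc, det_doubleVandermonde_swap, conj_tauNN_neg]
    _ = (-1) ^ N * gaugeC' N p θ x t * conj (tauNN N p θ (-x) t) := by ring
end

section
/- Let N ≥ 1, let p₁,…,p_{2N} be real numbers and θ₁,…,θ_{2N} be real numbers, and set ξᵢ(x,t) = pᵢx − i pᵢ² t. For (x,t) ∈ ℝ² let τ_{N−1,N+1}(x,t) be the determinant of the 2N×2N matrix whose i-th row is (pᵢⁿe^{ξᵢ})_{n=0}^{N−2} followed by (pᵢⁿe^{−iθᵢ})_{n=0}^{N}, and let τ_{N+1,N−1}(x,t) be the determinant of the 2N×2N matrix whose i-th row is (pᵢⁿe^{ξᵢ})_{n=0}^{N} followed by (pᵢⁿe^{−iθᵢ})_{n=0}^{N−2}. Then for all (x,t): τ_{N−1,N+1}(x,t) = (−1)^{N+1} · C′(x,t) · conj(τ_{N+1,N−1}(−x,t)), where C′(x,t) = Π_{i=1}^{2N} exp(pᵢx − i pᵢ² t − i θᵢ). -/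
open Complex Matrix ComplexConjugate

/-- The double Wronskian tau function `τ_{N-1,N+1}(x,t)`: the determinant of the
`2N×2N` matrix whose `i`-th row is `(pᵢⁿe^{ξᵢ})_{n=0}^{N-2}` followed by
`(pᵢⁿe^{-iθᵢ})_{n=0}^{N}`, with `ξᵢ = pᵢx - ipᵢ²t`. -/
noncomputable def tauNm1Np1 (N : ℕ) (p θ : Fin (N + N) → ℝ) (x t : ℝ) : ℂ :=
  Matrix.det (Matrix.of fun i j : Fin (N + N) =>
    if (j : ℕ) < N - 1 then
      (p i : ℂ) ^ (j : ℕ)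
        * Complex.exp ((p i : ℂ) * (x : ℂ) - Complex.I * (p i : ℂ) ^ 2 * (t : ℂ))
    else
      (p i : ℂ) ^ ((j : ℕ) - (N - 1)) * Complex.exp (-(Complex.I * (θ i : ℂ))))

/-- The double Wronskian tau function `τ_{N+1,N-1}(x,t)`: the determinant of the
`2N×2N` matrix whose `i`-th row is `(pᵢⁿe^{ξᵢ})_{n=0}^{N}` followed by
`(pᵢⁿe^{-iθᵢ})_{n=0}^{N-2}`, with `ξᵢ = pᵢx - ipᵢ²t`. -/
noncomputable def tauNp1Nm1 (N : ℕ) (p θ : Fin (N + N) → ℝ) (x t : ℝ) : ℂ :=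
  Matrix.det (Matrix.of fun i j : Fin (N + N) =>
    if (j : ℕ) < N + 1 then
      (p i : ℂ) ^ (j : ℕ)
        * Complex.exp ((p i : ℂ) * (x : ℂ) - Complex.I * (p i : ℂ) ^ 2 * (t : ℂ))
    else
      (p i : ℂ) ^ ((j : ℕ) - (N + 1)) * Complex.exp (-(Complex.I * (θ i : ℂ))))

/-!
For real parameters, complex conjugation combined with `x ↦ -x` turns the waves `e^ξ` and the
phases `e^{-iθ}` into their inverses; for complex ones `p`, `θ`, `x`, `t` are conjugated as well.
Clearing these inverses multiplies row `i` by `e^{ξᵢ} e^{-iθᵢ}`, which produces the gauge factor and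
interchanges the two column families. Moving a block of `b` columns past a block of `a` columns
costs the sign `(-1)^{ab}`.
-/

theorem val_finRotate_pow (n k : ℕ) (i : Fin n) :
    ((finRotate n ^ k) i : ℕ) = (i + k) % n := by
  have := i.neZero
  induction k with
  | zero => simp [Nat.mod_eq_of_lt i.isLt]
  | succ k ih =>
    rw [pow_succ', Equiv.Perm.mul_apply, finRotate_apply, Fin.val_add, ih, Fin.coe_ofNat_eq_mod,
      ← Nat.add_mod, add_assoc]

theorem sign_finRotate_pow (a b : ℕ) :
    Equiv.Perm.sign (finRotate (a + b) ^ b) = (-1) ^ (a * b) := by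
  rw [map_pow, sign_finRotate, ← pow_mul]
  cases b with
  | zero => rfl
  | succ c =>
    have even_mul_succ : Even (c * (c + 1)) := Nat.even_mul_succ_self c
    rw [← add_assoc, Nat.add_sub_cancel, add_mul, pow_add, even_mul_succ.neg_one_pow, mul_one]

theorem neg_one_pow_pred_mul_succ {R : Type*} [Ring R] {N : ℕ} (hN : 1 ≤ N) :
    (-1 : R) ^ ((N - 1) * (N + 1)) = (-1) ^ (N + 1) := by
  obtain ⟨m, rfl⟩ := Nat.exists_eq_add_of_le' hN
  exact neg_one_pow_congr (by simp [parity_simps])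

section DoubleWronskian

variable {R S : Type*} [CommRing R] [CommRing S] {n : ℕ}

/-- The matrix of a double Wronskian of exponentials: its `i`-th row is `(pᵢᵏ φᵢ)_{k < a}` followed
by `(pᵢᵏ ψᵢ)_{k < n - a}`. Only the length `a` of the first block is recorded, the second block
being the rest of the row. -/
def doubleWronskianMatrix (a : ℕ) (p φ ψ : Fin n → R) : Matrix (Fin n) (Fin n) R :=
  Matrix.of fun i j => if (j : ℕ) < a then p i ^ (j : ℕ) * φ i else p i ^ ((j : ℕ) - a) * ψ i

theorem map_doubleWronskianMatrix (f : R →+* S) (a : ℕ) (p φ ψ : Fin n → R) :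
    (doubleWronskianMatrix a p φ ψ).map f = doubleWronskianMatrix a (f ∘ p) (f ∘ φ) (f ∘ ψ) := by
  ext i j
  simp [doubleWronskianMatrix, apply_ite f]

theorem det_doubleWronskianMatrix_mul (a : ℕ) (p c φ ψ : Fin n → R) :
    (doubleWronskianMatrix a p (c * φ) (c * ψ)).det
      = (∏ i, c i) * (doubleWronskianMatrix a p φ ψ).det := by
  rw [← Matrix.det_mul_column]
  congr 1
  ext i j
  simp only [doubleWronskianMatrix, Matrix.of_apply, Pi.mul_apply, mul_ite, mul_left_comm (c i)]

theorem doubleWronskianMatrix_submatrix_finRotate_pow {a b : ℕ} (hab : a + b = n)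
    (p φ ψ : Fin n → R) :
    (doubleWronskianMatrix b p ψ φ).submatrix id ⇑(finRotate n ^ b)
      = doubleWronskianMatrix a p φ ψ := by
  ext i j
  simp only [doubleWronskianMatrix, Matrix.submatrix_apply, Matrix.of_apply, id,
    val_finRotate_pow]
  by_cases hj : (j : ℕ) < a
  · have column : (j + b) % n = j + b := Nat.mod_eq_of_lt (by lia)
    rw [column, if_neg (by lia), if_pos hj, Nat.add_sub_cancel]
  · have column : (j + b) % n = j - a := by
      rw [show (j : ℕ) + b = j - a + n by lia, Nat.add_mod_right, Nat.mod_eq_of_lt (by lia)]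
    rw [column, if_pos (by lia), if_neg hj]

theorem det_doubleWronskianMatrix_swap {a b : ℕ} (hab : a + b = n) (p φ ψ : Fin n → R) :
    (doubleWronskianMatrix a p φ ψ).det
      = (-1) ^ (a * b) * (doubleWronskianMatrix b p ψ φ).det := by
  subst hab
  rw [← doubleWronskianMatrix_submatrix_finRotate_pow rfl, Matrix.det_permute',
    sign_finRotate_pow]
  norm_cast

theorem det_doubleWronskianMatrix_eq_of_mul_eq_one {a b : ℕ} (hab : a + b = n)
    {p φ ψ φ' ψ' : Fin n → R} (hφ : φ * φ' = 1) (hψ : ψ * ψ' = 1) :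
    (doubleWronskianMatrix a p φ ψ).det
      = (-1) ^ (a * b) * (∏ i, φ i * ψ i) * (doubleWronskianMatrix b p φ' ψ').det := by
  have clear_left : φ * ψ * φ' = ψ := by rw [mul_right_comm, hφ, one_mul]
  have clear_right : φ * ψ * ψ' = φ := by rw [mul_assoc, hψ, mul_one]
  calc
    (doubleWronskianMatrix a p φ ψ).det
        = (-1) ^ (a * b) * (doubleWronskianMatrix b p ψ φ).det :=
      det_doubleWronskianMatrix_swap hab p φ ψ
    _ = (-1) ^ (a * b) * (doubleWronskianMatrix b p (φ * ψ * φ') (φ * ψ * ψ')).det := by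
      rw [clear_left, clear_right]
    _ = (-1) ^ (a * b) * (∏ i, φ i * ψ i) * (doubleWronskianMatrix b p φ' ψ').det := by
      simp only [det_doubleWronskianMatrix_mul, Pi.mul_apply, ← mul_assoc]

end DoubleWronskian

section Tau

/-- The exponential `e^ξ` with `ξ = p x - i p² t`, the function `φ` of the double Wronskian, for
complex arguments. -/
noncomputable def planeWave (p x t : ℂ) : ℂ := Complex.exp (p * x - Complex.I * p ^ 2 * t)

/-- The constant `e^{-iθ}`, the function `ψ` of the double Wronskian, for complex `θ`. -/
noncomputable def phaseFactor (θ : ℂ) : ℂ := Complex.exp (-(Complex.I * θ))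

theorem planeWave_mul_conj_planeWave (p x t : ℂ) :
    planeWave p x t * conj (planeWave (conj p) (-conj x) (conj t)) = 1 := by
  rw [planeWave, planeWave, ← Complex.exp_conj, ← Complex.exp_add, ← Complex.exp_zero]
  congr 1
  simp only [map_sub, map_mul, map_neg, map_pow, Complex.conj_conj, Complex.conj_I]
  ring

theorem phaseFactor_mul_conj_phaseFactor (θ : ℂ) :
    phaseFactor θ * conj (phaseFactor (conj θ)) = 1 := by
  simp [phaseFactor, ← Complex.exp_conj, ← Complex.exp_add]

variable {n : ℕ}

/-- The double Wronskian tau function `τ_{a,n-a}(x,t)` with wave numbers `p` and phases `θ`, all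
arguments being complex. -/
noncomputable def doubleWronskianTau (a : ℕ) (p θ : Fin n → ℂ) (x t : ℂ) : ℂ :=
  (doubleWronskianMatrix a p (fun i => planeWave (p i) x t) fun i => phaseFactor (θ i)).det

theorem conj_doubleWronskianTau (a : ℕ) (p θ : Fin n → ℂ) (x t : ℂ) :
    conj (doubleWronskianTau a p θ x t)
      = (doubleWronskianMatrix a (fun i => conj (p i)) (fun i => conj (planeWave (p i) x t))
          fun i => conj (phaseFactor (θ i))).det := by
  rw [doubleWronskianTau, RingHom.map_det, RingHom.mapMatrix_apply, map_doubleWronskianMatrix]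
  rfl

theorem stmt9_general {a b : ℕ} (hab : a + b = n) (p θ : Fin n → ℂ) (x t : ℂ) :
    doubleWronskianTau a p θ x t
      = (-1) ^ (a * b) * (∏ i, planeWave (p i) x t * phaseFactor (θ i))
        * conj (doubleWronskianTau b (fun i => conj (p i)) (fun i => conj (θ i))
            (-conj x) (conj t)) := by
  rw [conj_doubleWronskianTau]
  simp only [Complex.conj_conj]
  exact det_doubleWronskianMatrix_eq_of_mul_eq_one hab
    (funext fun i => planeWave_mul_conj_planeWave (p i) x t)
    (funext fun i => phaseFactor_mul_conj_phaseFactor (θ i))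

end Tau

section RealParameters

variable (N : ℕ) (p θ : Fin (N + N) → ℝ) (x t : ℝ)

theorem tauNm1Np1_eq_doubleWronskianTau :
    tauNm1Np1 N p θ x t = doubleWronskianTau (N - 1) (fun i => p i) (fun i => θ i) x t :=
  rfl

theorem tauNp1Nm1_eq_doubleWronskianTau :
    tauNp1Nm1 N p θ x t = doubleWronskianTau (N + 1) (fun i => p i) (fun i => θ i) x t :=
  rfl

theorem gaugeC'_eq_prod :
    gaugeC' N p θ x t = ∏ i, planeWave (p i) x t * phaseFactor (θ i) := by
  simp only [gaugeC', planeWave, phaseFactor, ← Complex.exp_add, ← sub_eq_add_neg]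

end RealParameters

/-- Lemma 2, second relation, real wave numbers: for all `(x,t)`,
`τ_{N-1,N+1}(x,t) = (-1)^{N+1} C′(x,t) conj(τ_{N+1,N-1}(-x,t))`. -/
theorem stmt9 (N : ℕ) (hN : 1 ≤ N) (p θ : Fin (N + N) → ℝ) :
    ∀ x t : ℝ,
      tauNm1Np1 N p θ x t
        = (-1 : ℂ) ^ (N + 1) * gaugeC' N p θ x t * conj (tauNp1Nm1 N p θ (-x) t) := by
  intro x t
  rw [tauNm1Np1_eq_doubleWronskianTau, tauNp1Nm1_eq_doubleWronskianTau, gaugeC'_eq_prod,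
    ← neg_one_pow_pred_mul_succ hN]
  simpa using stmt9_general (show N - 1 + (N + 1) = N + N by lia) (fun i => p i) (fun i => θ i) x t
end

section
/- Let n ≥ 1 and let pᵢ, qᵢ, ξ_{0i}, η_{0i} (1 ≤ i ≤ 2n) be complex constants. For real variables (x₁, x₂, y₁) set φᵢ^{(k)} = pᵢᵏ·exp(pᵢx₁ + pᵢ²x₂ + ξ_{0i}) and ψᵢ^{(k)} = qᵢᵏ·exp(qᵢy₁ + η_{0i}). For nonnegative integers N, M with N + M = 2n let τ_{N,M} be the determinant of the 2n×2n matrix whose i-th row is (φᵢ^{(0)},…,φᵢ^{(N−1)}, ψᵢ^{(0)},…,ψᵢ^{(M−1)}). Then for all (x₁, x₂, y₁): (∂_{x₁}∂_{y₁}τ_{n,n})·τ_{n,n} − (∂_{x₁}τ_{n,n})·(∂_{y₁}τ_{n,n}) = τ_{n+1,n−1}·τ_{n−1,n+1}; equivalently the Hirota bilinear equation D_{x₁}D_{y₁}τ_{n,n}·τ_{n,n} = 2τ_{n+1,n−1}τ_{n−1,n+1} holds. -/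
open Complex Matrix

/-- The double Wronskian tau function `τ_{N,M}` (with `N + M = 2n`) of the
two-component KP hierarchy: the determinant of the `2n×2n` matrix whose `i`-th row is
`(φᵢ^{(0)},…,φᵢ^{(N-1)}, ψᵢ^{(0)},…,ψᵢ^{(M-1)})` where
`φᵢ^{(k)} = pᵢᵏ e^{pᵢx₁ + pᵢ²x₂ + ξ_{0i}}` and `ψᵢ^{(k)} = qᵢᵏ e^{qᵢy₁ + η_{0i}}`. -/
noncomputable def tauNM (n : ℕ) (p q ξ0 η0 : Fin (n + n) → ℂ) (N : ℕ)
    (x₁ x₂ y₁ : ℝ) : ℂ :=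
  Matrix.det (Matrix.of fun i j : Fin (n + n) =>
    if (j : ℕ) < N then
      (p i) ^ (j : ℕ)
        * Complex.exp (p i * (x₁ : ℂ) + (p i) ^ 2 * (x₂ : ℂ) + ξ0 i)
    else
      (q i) ^ ((j : ℕ) - N) * Complex.exp (q i * (y₁ : ℂ) + η0 i))

/-!
Since `∂φ⁽ᵏ⁾ = φ⁽ᵏ⁺¹⁾` and `∂ψ⁽ᵏ⁾ = ψ⁽ᵏ⁺¹⁾`, differentiating a double Wronskian column by column
creates a repeated column in every term except the one where the highest `φ`, respectively the
highest `ψ`, is raised. So all the derivatives of `τ_{N,M}` in the equation replace column `N - 1`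
by `φ⁽ᴺ⁾`, the last column by `ψ⁽ᴹ⁾`, or both. Up to a cyclic permutation of columns, `τ_{N+1,M-1}`
puts `φ⁽ᴺ⁾` in the last column instead, and `τ_{N-1,M+1}` puts `ψ⁽ᴹ⁾` in column `N - 1`. The
equation is then the three-term Plücker relation between these determinants.
-/

section Determinant

variable {ι R : Type*} [Fintype ι] [DecidableEq ι] [CommRing R]

theorem det_updateCol_sum_smul {κ : Type*} [Fintype κ] (A : Matrix ι ι R) (i : ι) (c : κ → R)
    (w : κ → ι → R) :
    (A.updateCol i (∑ k, c k • w k)).det = ∑ k, c k * (A.updateCol i (w k)).det := by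
  simp only [← cramer_apply, map_sum, map_smul, Finset.sum_apply, Pi.smul_apply, smul_eq_mul]

theorem det_updateCol_updateCol_swap (A : Matrix ι ι R) {i j : ι} (hij : i ≠ j) (v : ι → R) :
    ((A.updateCol j v).updateCol i (A.col j)).det = -(A.updateCol i v).det := by
  have hperm : (A.updateCol j v).updateCol i (A.col j)
      = (A.updateCol i v).submatrix id (Equiv.swap i j) := by
    ext r k
    rcases eq_or_ne k i with rfl | hki
    · simp [hij.symm]
    rcases eq_or_ne k j with rfl | hkj
    · simp [hki]
    · simp [hki, hkj, Equiv.swap_apply_of_ne_of_ne]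
  rw [hperm, det_permute', Equiv.Perm.sign_swap hij]
  simp

/-- The three-term Plücker relation. Cramer's rule expands `A.det • u` in the columns of `A`; put
into column `i` of the second factor, only the `i`-th and the `j`-th of them contribute. -/
theorem det_mul_det_updateCol_updateCol (A : Matrix ι ι R) {i j : ι} (hij : i ≠ j) (u v : ι → R) :
    A.det * ((A.updateCol j v).updateCol i u).det
      = (A.updateCol i u).det * (A.updateCol j v).det
        - (A.updateCol j u).det * (A.updateCol i v).det := by
  have cramer_rule : A.det • u = ∑ k, (A.updateCol k u).det • A.col k := by
    rw [← mulVec_cramer, mulVec_eq_sum]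
    simp only [cramer_apply, op_smul_eq_smul]
    rfl
  have term_i : ((A.updateCol j v).updateCol i (A.col i)).det = (A.updateCol j v).det := by
    rw [updateCol_comm _ hij.symm]
    exact congrArg (fun B => (updateCol B j v).det) (updateCol_eq_self A i)
  have term_other (k : ι) (hk : k ≠ i ∧ k ≠ j) :
      ((A.updateCol j v).updateCol i (A.col k)).det = 0 :=
    det_zero_of_column_eq hk.1 fun r => by simp [hk.1, hk.2]
  calc A.det * ((A.updateCol j v).updateCol i u).det
      = ((A.updateCol j v).updateCol i (A.det • u)).det := (det_updateCol_smul _ _ _ _).symm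
    _ = ∑ k, (A.updateCol k u).det * ((A.updateCol j v).updateCol i (A.col k)).det := by
        rw [cramer_rule, det_updateCol_sum_smul]
    _ = (A.updateCol i u).det * (A.updateCol j v).det
          + (A.updateCol j u).det * -(A.updateCol i v).det := by
        rw [Fintype.sum_eq_add i j hij fun k hk => by rw [term_other k hk, mul_zero], term_i,
          det_updateCol_updateCol_swap A hij]
    _ = _ := by ring

end Determinant

section Derivative

variable {𝕜 R ι : Type*} [NontriviallyNormedField 𝕜] [NormedCommRing R] [NormedAlgebra 𝕜 R]
  [Fintype ι] [DecidableEq ι] {A : 𝕜 → Matrix ι ι R} {A' : Matrix ι ι R} {x : 𝕜}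

theorem hasDerivAt_det_s10 (hA : ∀ j, HasDerivAt (fun t => (A t).col j) (A'.col j) x) :
    HasDerivAt (fun t => (A t).det) (∑ j, ((A x).updateCol j (A'.col j)).det) x := by
  simp only [det_apply]
  rw [Finset.sum_comm]
  refine HasDerivAt.fun_sum fun σ _ => ?_
  rw [← Finset.smul_sum]
  have hprod := HasDerivAt.fun_finsetProd (u := Finset.univ)
    fun j _ => hasDerivAt_pi.1 (hA j) (σ j)
  refine (hprod.congr_deriv (Finset.sum_congr rfl fun j _ => ?_)).const_smul (Equiv.Perm.sign σ)
  rw [← Finset.prod_erase_mul _ _ (Finset.mem_univ j), updateCol_self, smul_eq_mul]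
  congr 1
  exact Finset.prod_congr rfl fun k hk => (updateCol_ne (Finset.ne_of_mem_erase hk)).symm

theorem hasDerivAt_det_of_forall_ne (i : ι)
    (hA : ∀ j, HasDerivAt (fun t => (A t).col j) (A'.col j) x)
    (hA' : ∀ j ≠ i, A'.col j = 0 ∨ ∃ k ≠ j, A'.col j = (A x).col k) :
    HasDerivAt (fun t => (A t).det) ((A x).updateCol i (A'.col i)).det x := by
  refine (hasDerivAt_det_s10 hA).congr_deriv (Fintype.sum_eq_single i fun j hji => ?_)
  rcases hA' j hji with hzero | ⟨k, hkj, hcol⟩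
  · exact det_eq_zero_of_column_eq_zero j fun r => by simp [hzero]
  · rw [hcol]
    exact det_updateCol_eq_zero hkj

end Derivative

/-- The square matrix with columns `f 0, …, f (N - 1), g 0, …, g (m - N - 1)`. It is a double
Wronskian matrix when `f k` and `g k` are the `k`-th derivatives of `f 0` and `g 0`; the sequences
are left arbitrary so that single columns can be replaced and the two variables kept apart. -/
def doubleWronskian {R : Type*} {m : ℕ} (f g : ℕ → Fin m → R) (N : ℕ) :
    Matrix (Fin m) (Fin m) R :=
  of fun r j => if (j : ℕ) < N then f j r else g (j - N) r

namespace doubleWronskian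

section Columns

variable {R : Type*} {m N : ℕ} (f g : ℕ → Fin m → R) {i j l : Fin m}

theorem col_of_lt (hj : (j : ℕ) < N) : (doubleWronskian f g N).col j = f j := by
  ext r
  simp [doubleWronskian, hj]

theorem col_of_le (hj : N ≤ j) : (doubleWronskian f g N).col j = g (j - N) := by
  ext r
  simp [doubleWronskian, hj.not_gt]

theorem updateCol_of_le (hj : N ≤ j) (w : Fin m → R) :
    (doubleWronskian f g N).updateCol j w
      = doubleWronskian f (Function.update g (j - N) w) N := by
  ext r k
  rcases eq_or_ne k j with rfl | hkj
  · simp [doubleWronskian, hj.not_gt]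
  · have : N ≤ k → (k : ℕ) - N ≠ j - N := by have := Fin.val_ne_of_ne hkj; omega
    simp only [updateCol_ne hkj, doubleWronskian, of_apply]
    split_ifs with hk
    · rfl
    · rw [Function.update_of_ne (this (not_lt.1 hk))]

theorem updateCol_last_eq_submatrix (hil : i ≤ l) (hl : (l : ℕ) + 1 = m) (w : Fin m → R) :
    (doubleWronskian f g i).updateCol l w
      = ((doubleWronskian f g (i + 1)).updateCol i w).submatrix id (Fin.cycleIcc i l) := by
  have : NeZero m := ⟨by omega⟩
  ext r j
  rw [submatrix_apply, id]
  rcases eq_or_ne j l with rfl | hjl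
  · rw [Fin.cycleIcc_of_last hil, updateCol_self, updateCol_self]
  have hjl' : j < l := by have := Fin.val_ne_of_ne hjl; omega
  rw [updateCol_ne hjl]
  rcases lt_or_ge j i with hji | hij
  · have hji' : (j : ℕ) < i + 1 := Nat.lt_succ_of_lt hji
    rw [Fin.cycleIcc_of_lt hji, updateCol_ne hji.ne]
    exact congrFun ((col_of_lt f g hji).trans (col_of_lt f g hji').symm) r
  · have hsucc : ((j + 1 : Fin m) : ℕ) = j + 1 := Fin.val_add_one_of_lt' (by omega)
    have hcol : (doubleWronskian f g (i + 1)).col (j + 1) = g (j - i) := by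
      rw [col_of_le f g (by omega), hsucc, Nat.add_sub_add_right]
    rw [Fin.cycleIcc_of_ge_of_lt hij hjl', updateCol_ne (by omega)]
    exact congrFun ((col_of_le f g hij).trans hcol.symm) r

variable [CommRing R]

theorem det_updateCol_last (hil : i ≤ l) (hl : (l : ℕ) + 1 = m) (w : Fin m → R) :
    ((doubleWronskian f g i).updateCol l w).det
      = (-1) ^ (l - i : ℕ) * ((doubleWronskian f g (i + 1)).updateCol i w).det := by
  rw [updateCol_last_eq_submatrix f g hil hl, det_permute', Fin.sign_cycleIcc_of_le hil]
  simp

theorem det_updateCol_last_left (hil : i ≤ l) (hl : (l : ℕ) + 1 = m) :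
    ((doubleWronskian f g i).updateCol l (f i)).det
      = (-1) ^ (l - i : ℕ) * (doubleWronskian f g (i + 1)).det := by
  rw [det_updateCol_last f g hil hl, ← col_of_lt f g i.val.lt_succ_self]
  exact congrArg (fun B => _ * det B) (updateCol_eq_self _ i)

theorem det_updateCol_right (hil : i ≤ l) (hl : (l : ℕ) + 1 = m) :
    ((doubleWronskian f g (i + 1)).updateCol i (g (l - i))).det
      = (-1) ^ (l - i : ℕ) * (doubleWronskian f g i).det := by
  have hcol : (doubleWronskian f g i).updateCol l (g (l - i)) = doubleWronskian f g i := by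
    rw [← col_of_le f g hil]
    exact updateCol_eq_self _ l
  rw [← hcol, det_updateCol_last f g hil hl, ← mul_assoc, ← mul_pow]
  simp

theorem det_updateCol_last_mul_det_updateCol (hil : i < l) (hl : (l : ℕ) + 1 = m) :
    ((doubleWronskian f g (i + 1)).updateCol l (f (i + 1))).det
        * ((doubleWronskian f g (i + 1)).updateCol i (g (l - i))).det
      = -((doubleWronskian f g (i + 2)).det * (doubleWronskian f g i).det) := by
  obtain ⟨i', hi'⟩ : ∃ i' : Fin m, (i' : ℕ) = i + 1 := ⟨⟨i + 1, by omega⟩, rfl⟩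
  have hleft := det_updateCol_last_left f g (i := i') (l := l) (by omega) hl
  obtain ⟨d, hd⟩ : ∃ d, (l : ℕ) - i = d + 1 := ⟨l - i - 1, by omega⟩
  rw [hi', show (l : ℕ) - (i + 1) = d by omega] at hleft
  rw [hleft, det_updateCol_right f g hil.le hl, hd]
  have : ((-1 : R) ^ d) * (-1) ^ d = 1 := by rw [← mul_pow]; simp
  linear_combination (-(doubleWronskian f g (i + 2)).det * (doubleWronskian f g i).det) * this

end Columns

section Hirota

variable {𝕜 R : Type*} [NontriviallyNormedField 𝕜] [NormedCommRing R] [NormedAlgebra 𝕜 R]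
  {m : ℕ} {i l : Fin m} {x y : 𝕜}

theorem hasDerivAt_det_left {f : ℕ → 𝕜 → Fin m → R}
    (hf : ∀ k, HasDerivAt (f k) (f (k + 1) x) x) (g : ℕ → Fin m → R) (i : Fin m) :
    HasDerivAt (fun u => (doubleWronskian (f · u) g (i + 1)).det)
      ((doubleWronskian (f · x) g (i + 1)).updateCol i (f (i + 1) x)).det x := by
  let A' : Matrix (Fin m) (Fin m) R := doubleWronskian (fun k => f (k + 1) x) 0 (i + 1)
  have hA' : A'.col i = f (i + 1) x := col_of_lt _ _ i.val.lt_succ_self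
  rw [← hA']
  refine hasDerivAt_det_of_forall_ne i (fun j => ?_) fun j hji => ?_
  · rcases lt_or_ge (j : ℕ) (i + 1) with hj | hj
    · simpa only [A', col_of_lt _ _ hj] using hf j
    · simpa only [A', col_of_le _ _ hj, Pi.zero_apply] using hasDerivAt_const x _
  · rcases lt_or_ge (j : ℕ) (i + 1) with hj | hj
    · have hji' := Fin.val_ne_of_ne hji
      refine Or.inr ⟨⟨j + 1, by omega⟩, by simp [Fin.ext_iff], ?_⟩
      rw [col_of_lt _ _ hj, col_of_lt _ _ (by simp only; omega)]
    · exact Or.inl (col_of_le _ _ hj)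

theorem hasDerivAt_det_right (f : ℕ → Fin m → R) {g : ℕ → 𝕜 → Fin m → R}
    (hg : ∀ k, HasDerivAt (g k) (g (k + 1) y) y) {N : ℕ} (hN : N ≤ l) (hl : (l : ℕ) + 1 = m) :
    HasDerivAt (fun v => (doubleWronskian f (g · v) N).det)
      ((doubleWronskian f (g · y) N).updateCol l (g (l - N + 1) y)).det y := by
  let A' : Matrix (Fin m) (Fin m) R := doubleWronskian 0 (fun k => g (k + 1) y) N
  have hA' : A'.col l = g (l - N + 1) y := col_of_le _ _ hN
  rw [← hA']
  refine hasDerivAt_det_of_forall_ne l (fun j => ?_) fun j hjl => ?_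
  · rcases lt_or_ge (j : ℕ) N with hj | hj
    · simpa only [A', col_of_lt _ _ hj, Pi.zero_apply] using hasDerivAt_const y _
    · simpa only [A', col_of_le _ _ hj] using hg (j - N)
  · rcases lt_or_ge (j : ℕ) N with hj | hj
    · exact Or.inl (col_of_lt _ _ hj)
    · have hjl' := Fin.val_ne_of_ne hjl
      refine Or.inr ⟨⟨j + 1, by omega⟩, by simp [Fin.ext_iff], ?_⟩
      rw [col_of_le _ _ hj, col_of_le _ _ (by simp only; omega)]
      simp only [Nat.sub_add_comm hj]

theorem hirota_bilinear {f g : ℕ → 𝕜 → Fin m → R}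
    (hf : ∀ k, HasDerivAt (f k) (f (k + 1) x) x) (hg : ∀ k, HasDerivAt (g k) (g (k + 1) y) y)
    (hil : i < l) (hl : (l : ℕ) + 1 = m) :
    deriv (fun u => deriv (fun v => (doubleWronskian (f · u) (g · v) (i + 1)).det) y) x
          * (doubleWronskian (f · x) (g · y) (i + 1)).det
        - deriv (fun u => (doubleWronskian (f · u) (g · y) (i + 1)).det) x
          * deriv (fun v => (doubleWronskian (f · x) (g · v) (i + 1)).det) y
      = (doubleWronskian (f · x) (g · y) (i + 2)).det
          * (doubleWronskian (f · x) (g · y) i).det := by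
  set W := doubleWronskian (f · x) (g · y) (i + 1) with hW
  have hle : (i : ℕ) + 1 ≤ l := hil
  have hdy (u : 𝕜) : deriv (fun v => (doubleWronskian (f · u) (g · v) (i + 1)).det) y
      = ((doubleWronskian (f · u) (g · y) (i + 1)).updateCol l (g (l - i) y)).det := by
    rw [(hasDerivAt_det_right _ hg hle hl).deriv, show (l : ℕ) - (i + 1) + 1 = l - i by omega]
  have hdx : deriv (fun u => (doubleWronskian (f · u) (g · y) (i + 1)).det) x
      = (W.updateCol i (f (i + 1) x)).det := (hasDerivAt_det_left hf _ i).deriv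
  have hdxdy : deriv (fun u =>
        ((doubleWronskian (f · u) (g · y) (i + 1)).updateCol l (g (l - i) y)).det) x
      = ((W.updateCol l (g (l - i) y)).updateCol i (f (i + 1) x)).det := by
    simp only [hW, updateCol_of_le _ _ hle]
    exact (hasDerivAt_det_left hf _ i).deriv
  have hplucker := det_mul_det_updateCol_updateCol W hil.ne (f (i + 1) x) (g (l - i) y)
  have hshift := det_updateCol_last_mul_det_updateCol (f · x) (g · y) hil hl
  simp only [hdy]
  rw [hdxdy, hdx]
  linear_combination hplucker - hshift

end Hirota

end doubleWronskian

/-- The vector with entries `pᵢᵏ exp (pᵢ t + cᵢ)`, the `k`-th derivative in `t` of a vector of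
exponentials: `φ⁽ᵏ⁾` for `cᵢ = pᵢ² x₂ + ξ_{0i}`, and `ψ⁽ᵏ⁾` for the exponents `q` and `c = η₀`. -/
noncomputable def expCol {ι : Type*} (p c : ι → ℂ) (k : ℕ) (t : ℝ) : ι → ℂ :=
  fun i => p i ^ k * exp (p i * t + c i)

theorem hasDerivAt_expCol {ι : Type*} [Finite ι] (p c : ι → ℂ) (k : ℕ) (t : ℝ) :
    HasDerivAt (expCol p c k) (expCol p c (k + 1) t) t := by
  cases nonempty_fintype ι
  refine hasDerivAt_pi.2 fun i => ?_
  have hexp := (((ofRealCLM.hasDerivAt (x := t)).const_mul (p i)).add_const (c i)).cexp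
  refine (hexp.const_mul (p i ^ k)).congr_deriv ?_
  simp only [expCol, ofRealCLM_apply, ofReal_one]
  ring

theorem tauNM_eq_det_doubleWronskian (n : ℕ) (p q ξ0 η0 : Fin (n + n) → ℂ) (N : ℕ)
    (x₁ x₂ y₁ : ℝ) :
    tauNM n p q ξ0 η0 N x₁ x₂ y₁
      = (doubleWronskian (expCol p (fun i => p i ^ 2 * x₂ + ξ0 i) · x₁)
          (expCol q η0 · y₁) N).det := by
  simp only [tauNM, doubleWronskian, expCol, add_assoc]

theorem stmt10_general (n N : ℕ) (hN : 1 ≤ N) (hNn : N < n + n) (p q ξ0 η0 : Fin (n + n) → ℂ)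
    (x₁ x₂ y₁ : ℝ) :
    deriv (fun u => deriv (fun v => tauNM n p q ξ0 η0 N u x₂ v) y₁) x₁
          * tauNM n p q ξ0 η0 N x₁ x₂ y₁
        - deriv (fun u => tauNM n p q ξ0 η0 N u x₂ y₁) x₁
          * deriv (fun v => tauNM n p q ξ0 η0 N x₁ x₂ v) y₁
      = tauNM n p q ξ0 η0 (N + 1) x₁ x₂ y₁ * tauNM n p q ξ0 η0 (N - 1) x₁ x₂ y₁ := by
  obtain ⟨i, rfl⟩ : ∃ i, N = i + 1 := ⟨N - 1, by omega⟩
  simp only [tauNM_eq_det_doubleWronskian]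
  exact doubleWronskian.hirota_bilinear (i := ⟨i, by omega⟩) (l := ⟨n + n - 1, by omega⟩)
    (hasDerivAt_expCol p _ · x₁) (hasDerivAt_expCol q η0 · y₁)
    (Fin.mk_lt_mk.2 (by omega)) (by simp only; omega)

/-- the double Wronskian tau functions satisfy the Hirota bilinear
equation `D_{x₁}D_{y₁} τ_{n,n}·τ_{n,n} = 2 τ_{n+1,n-1} τ_{n-1,n+1}`, written out as
`(∂_{x₁}∂_{y₁}τ_{n,n})τ_{n,n} - (∂_{x₁}τ_{n,n})(∂_{y₁}τ_{n,n}) = τ_{n+1,n-1}τ_{n-1,n+1}`. -/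
theorem stmt10 (n : ℕ) (hn : 1 ≤ n) (p q ξ0 η0 : Fin (n + n) → ℂ) :
    ∀ x₁ x₂ y₁ : ℝ,
      deriv (fun u => deriv (fun v => tauNM n p q ξ0 η0 n u x₂ v) y₁) x₁
          * tauNM n p q ξ0 η0 n x₁ x₂ y₁
        - deriv (fun u => tauNM n p q ξ0 η0 n u x₂ y₁) x₁
          * deriv (fun v => tauNM n p q ξ0 η0 n x₁ x₂ v) y₁
      = tauNM n p q ξ0 η0 (n + 1) x₁ x₂ y₁ * tauNM n p q ξ0 η0 (n - 1) x₁ x₂ y₁ :=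
  stmt10_general n n hn (by omega) p q ξ0 η0
end

section
/- Let ρ > 0 and let f, g : ℝ × ℝ → ℂ be smooth functions such that f(x,t) ≠ 0 for all (x,t) and f(x,t) = conj(f(−x,t)). Suppose that for all (x,t) ∈ ℝ²: (i) i(∂ₜg·f − g·∂ₜf) − (∂ₓ²g·f − 2∂ₓg·∂ₓf + g·∂ₓ²f) = 0, and (ii) 2(∂ₓ²f(x,t)·f(x,t) − (∂ₓf(x,t))²) − 2ρ²f(x,t)² = −2ρ²·g(x,t)·conj(g(−x,t)). Then q(x,t) := ρ·(g(x,t)/f(x,t))·exp(2iρ²t) satisfies the defocusing nonlocal NLS equation i·∂ₜq(x,t) = ∂ₓ²q(x,t) − 2·conj(q(−x,t))·q(x,t)² for all (x,t). -/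
open Complex ComplexConjugate

/-!
Hirota's operators are made for quotients: `∂(g/f) = (D g·f)/f²` and
`∂²(g/f) = (D² g·f)/f² - (g/f) (D² f·f)/f²`. Hence (i) says that `w = g/f` satisfies
`i wₜ = wₓₓ + w (D_x² f·f)/f²`. By (ii) the last coefficient is `2c - 2c g(x,t) g*(-x,t)/f²` with
`c = σρ²` (`σ = 1` in (ii)): the constant part is absorbed by the phase `e^{2ict}`, and
the rest is the nonlinearity, because `f(x,t) = f*(-x,t)` and the phases of `q(x,t)` and
`q*(-x,t)` cancel.
-/

open scoped Topology

section HirotaOperators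

variable {𝕜 𝕜' : Type*} [NontriviallyNormedField 𝕜] [NontriviallyNormedField 𝕜']
  [NormedAlgebra 𝕜 𝕜']

/-- Hirota's bilinear derivative `D g·f = g' f - g f'` of functions of one variable, the
antisymmetric counterpart of the Leibniz rule. A partial operator such as `D_t g·f` is obtained by
freezing the other variable. -/
noncomputable def hirotaD (g f : 𝕜 → 𝕜') (x : 𝕜) : 𝕜' :=
  deriv g x * f x - g x * deriv f x

/-- Hirota's second-order bilinear derivative `D² g·f = g'' f - 2 g' f' + g f''` of functions of
one variable. It is not the iterate of `hirotaD`, which takes two functions and returns one. -/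
noncomputable def hirotaDSq (g f : 𝕜 → 𝕜') (x : 𝕜) : 𝕜' :=
  deriv (deriv g) x * f x - 2 * deriv g x * deriv f x + g x * deriv (deriv f) x

variable {g f : 𝕜 → 𝕜'} {x : 𝕜}

theorem hirotaDSq_self (f : 𝕜 → 𝕜') (x : 𝕜) :
    hirotaDSq f f x = 2 * (deriv (deriv f) x * f x - deriv f x ^ 2) := by
  unfold hirotaDSq
  ring

theorem deriv_div_eq_hirotaD_div_sq (hg : DifferentiableAt 𝕜 g x) (hf : DifferentiableAt 𝕜 f x)
    (hfx : f x ≠ 0) : deriv (fun y ↦ g y / f y) x = hirotaD g f x / f x ^ 2 :=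
  deriv_fun_div hg hf hfx

theorem hasDerivAt_hirotaD (hg : DifferentiableAt 𝕜 g x) (hf : DifferentiableAt 𝕜 f x)
    (hg' : DifferentiableAt 𝕜 (deriv g) x) (hf' : DifferentiableAt 𝕜 (deriv f) x) :
    HasDerivAt (hirotaD g f) (deriv (deriv g) x * f x - g x * deriv (deriv f) x) x :=
  ((hg'.hasDerivAt.fun_mul hf.hasDerivAt).fun_sub
    (hg.hasDerivAt.fun_mul hf'.hasDerivAt)).congr_deriv (by ring)

theorem deriv_deriv_div_eq_hirotaDSq (hg : ∀ᶠ y in 𝓝 x, DifferentiableAt 𝕜 g y)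
    (hf : ∀ᶠ y in 𝓝 x, DifferentiableAt 𝕜 f y) (hg' : DifferentiableAt 𝕜 (deriv g) x)
    (hf' : DifferentiableAt 𝕜 (deriv f) x) (hfx : f x ≠ 0) :
    deriv (deriv fun y ↦ g y / f y) x =
      hirotaDSq g f x / f x ^ 2 - g x / f x * (hirotaDSq f f x / f x ^ 2) := by
  have diff_g := hg.self_of_nhds
  have diff_f := hf.self_of_nhds
  have first_deriv : (deriv fun y ↦ g y / f y) =ᶠ[𝓝 x] fun y ↦ hirotaD g f y / f y ^ 2 := by
    filter_upwards [hg, hf, diff_f.continuousAt.eventually_ne hfx] with y hgy hfy hfy_ne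
    exact deriv_div_eq_hirotaD_div_sq hgy hfy hfy_ne
  have second_deriv := ((hasDerivAt_hirotaD diff_g diff_f hg' hf').fun_div
    (diff_f.hasDerivAt.fun_pow 2) (pow_ne_zero 2 hfx)).deriv
  rw [first_deriv.deriv_eq, second_deriv]
  unfold hirotaD hirotaDSq
  field_simp
  push_cast
  ring

end HirotaOperators

/-- The regularity needed to substitute `u(x, t)` into a Schrödinger equation: twice
differentiable in the first variable `x` and once in the second variable `t`, separately and
without continuity of the derivatives. -/
structure SchrodingerDifferentiable (u : ℝ → ℝ → ℂ) : Prop where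
  space (t : ℝ) : Differentiable ℝ fun x ↦ u x t
  deriv_space (t : ℝ) : Differentiable ℝ (deriv fun x ↦ u x t)
  time (x : ℝ) : Differentiable ℝ fun t ↦ u x t

theorem SchrodingerDifferentiable.of_contDiff {u : ℝ → ℝ → ℂ}
    (hu : ContDiff ℝ 2 (Function.uncurry u)) : SchrodingerDifferentiable u := by
  have contDiff_space (t : ℝ) : ContDiff ℝ 2 fun x ↦ u x t :=
    hu.comp (contDiff_id.prodMk contDiff_const)
  have contDiff_time (x : ℝ) : ContDiff ℝ 2 fun t ↦ u x t :=
    hu.comp (contDiff_const.prodMk contDiff_id)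
  exact {
    space := fun t ↦ (contDiff_space t).differentiable two_ne_zero
    deriv_space := fun t ↦ (contDiff_space t).differentiable_deriv_two
    time := fun x ↦ (contDiff_time x).differentiable two_ne_zero }

theorem schrodinger_div_of_hirota {f g : ℝ → ℝ → ℂ} (hf : SchrodingerDifferentiable f)
    (hg : SchrodingerDifferentiable g) {x t : ℝ} (hfxt : f x t ≠ 0)
    (hbil : I * hirotaD (fun s ↦ g x s) (fun s ↦ f x s) t
      - hirotaDSq (fun y ↦ g y t) (fun y ↦ f y t) x = 0) :
    I * deriv (fun s ↦ g x s / f x s) t = deriv (deriv fun y ↦ g y t / f y t) x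
      + g x t / f x t * (hirotaDSq (fun y ↦ f y t) (fun y ↦ f y t) x / f x t ^ 2) := by
  rw [deriv_div_eq_hirotaD_div_sq (hg.time x t) (hf.time x t) hfxt,
    deriv_deriv_div_eq_hirotaDSq (.of_forall (hg.space t)) (.of_forall (hf.space t))
      (hg.deriv_space t x) (hf.deriv_space t x) hfxt]
  linear_combination hbil / f x t ^ 2

theorem schrodinger_const_mul_exp {w : ℝ → ℝ → ℂ} {V : ℂ} {x t : ℝ} (a c : ℂ)
    (hw : DifferentiableAt ℝ (fun s ↦ w x s) t)
    (heq : I * deriv (fun s ↦ w x s) t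
      = deriv (deriv fun y ↦ w y t) x + (2 * c - V) * w x t) :
    I * deriv (fun s : ℝ ↦ a * w x s * exp (2 * I * c * s)) t
      = deriv (deriv fun y ↦ a * w y t * exp (2 * I * c * t)) x
        - V * (a * w x t * exp (2 * I * c * t)) := by
  have phase_deriv : HasDerivAt (fun s : ℝ ↦ exp (2 * I * c * s))
      (exp (2 * I * c * t) * (2 * I * c * 1)) t :=
    (ofRealCLM.hasDerivAt.const_mul _).cexp
  have time_deriv := ((hw.hasDerivAt.const_mul a).fun_mul phase_deriv).deriv
  have space_deriv : deriv (deriv fun y ↦ a * w y t * exp (2 * I * c * t)) x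
      = a * deriv (deriv fun y ↦ w y t) x * exp (2 * I * c * t) := by
    simp only [deriv_mul_const_field', deriv_const_mul_field']
  rw [time_deriv, space_deriv]
  linear_combination a * exp (2 * I * c * t) * heq
    + 2 * c * a * w x t * exp (2 * I * c * t) * I_sq

theorem conj_exp_mul_exp_of_re_eq_zero {z : ℂ} (hz : z.re = 0) : conj (exp z) * exp z = 1 := by
  rw [conj_mul', norm_exp, hz, Real.exp_zero, ofReal_one, one_pow]

theorem stmt11_general (σ ρ : ℝ) (f g : ℝ → ℝ → ℂ)
    (hf : SchrodingerDifferentiable f) (hg : SchrodingerDifferentiable g)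
    (hfne : ∀ x t : ℝ, f x t ≠ 0)
    (hsym : ∀ x t : ℝ, f x t = conj (f (-x) t))
    (hbil1 : ∀ x t : ℝ, I * hirotaD (fun t' ↦ g x t') (fun t' ↦ f x t') t
      - hirotaDSq (fun x' ↦ g x' t) (fun x' ↦ f x' t) x = 0)
    (hbil2 : ∀ x t : ℝ, hirotaDSq (fun x' ↦ f x' t) (fun x' ↦ f x' t) x
        - 2 * (σ * ρ ^ 2) * f x t ^ 2
      = -2 * (σ * ρ ^ 2) * g x t * conj (g (-x) t))
    (q : ℝ → ℝ → ℂ)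
    (hq : ∀ x t : ℝ, q x t = ρ * (g x t / f x t) * exp (2 * I * (σ * ρ ^ 2) * t)) :
    ∀ x t : ℝ, I * deriv (fun t' ↦ q x t') t
      = deriv (deriv fun x' ↦ q x' t) x - 2 * σ * conj (q (-x) t) * q x t ^ 2 := by
  intro x t
  have hfxt := hfne x t
  set phase := exp (2 * I * (σ * ρ ^ 2) * t) with hphase
  have phase_unimodular : conj phase * phase = 1 :=
    conj_exp_mul_exp_of_re_eq_zero (by simp [← ofReal_pow])
  have density : conj (q (-x) t) * q x t = ρ ^ 2 * (g x t * conj (g (-x) t)) / f x t ^ 2 := by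
    simp only [hq, map_mul, map_div₀, ← hsym x t, conj_ofReal, ← hphase]
    linear_combination ρ ^ 2 * (g x t * conj (g (-x) t)) / f x t ^ 2 * phase_unimodular
  have potential : hirotaDSq (fun y ↦ f y t) (fun y ↦ f y t) x / f x t ^ 2
      = 2 * (σ * ρ ^ 2) - 2 * σ * (conj (q (-x) t) * q x t) := by
    rw [density]
    field_simp
    linear_combination hbil2 x t
  have quotient_eq := schrodinger_div_of_hirota hf hg hfxt (hbil1 x t)
  rw [potential, mul_comm (g x t / f x t)] at quotient_eq
  have wave_eq := schrodinger_const_mul_exp (w := fun x t ↦ g x t / f x t) ρ (σ * ρ ^ 2)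
    ((hg.time x t).fun_div (hf.time x t) hfxt) quotient_eq
  simp only [← hq] at wave_eq
  linear_combination wave_eq

/-- If `f, g` are smooth, `f` is nonvanishing and satisfies
`f(x,t) = conj (f(-x,t))`, and the pair `(f,g)` satisfies the Hirota bilinear
equations `(iD_t - D_x²) g·f = 0` and `(D_x² - 2ρ²) f·f = -2ρ² g(x,t) g*(-x,t)`,
then `q(x,t) = ρ (g/f) e^{2iρ²t}` solves the defocusing nonlocal NLS equation
`i qₜ = q_xx - 2 q*(-x,t) q²`. -/
theorem stmt11 (ρ : ℝ) (hρ : 0 < ρ)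
    (f g : ℝ → ℝ → ℂ)
    (hf : ContDiff ℝ (⊤ : ℕ∞) (Function.uncurry f))
    (hg : ContDiff ℝ (⊤ : ℕ∞) (Function.uncurry g))
    (hfne : ∀ x t : ℝ, f x t ≠ 0)
    (hsym : ∀ x t : ℝ, f x t = conj (f (-x) t))
    (hbil1 : ∀ x t : ℝ,
      Complex.I * (deriv (fun t' => g x t') t * f x t - g x t * deriv (fun t' => f x t') t)
        - (deriv (deriv (fun x' => g x' t)) x * f x t
            - 2 * deriv (fun x' => g x' t) x * deriv (fun x' => f x' t) x
            + g x t * deriv (deriv (fun x' => f x' t)) x) = 0)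
    (hbil2 : ∀ x t : ℝ,
      2 * (deriv (deriv (fun x' => f x' t)) x * f x t - (deriv (fun x' => f x' t) x) ^ 2)
          - 2 * (ρ : ℂ) ^ 2 * (f x t) ^ 2
        = -2 * (ρ : ℂ) ^ 2 * g x t * conj (g (-x) t))
    (q : ℝ → ℝ → ℂ)
    (hq : ∀ x t : ℝ,
      q x t = (ρ : ℂ) * (g x t / f x t) * Complex.exp (2 * Complex.I * (ρ : ℂ) ^ 2 * (t : ℂ))) :
    ∀ x t : ℝ,
      Complex.I * deriv (fun t' => q x t') t
        = deriv (deriv (fun x' => q x' t)) x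
          - 2 * conj (q (-x) t) * (q x t) ^ 2 := by
  simpa only [ofReal_one, one_mul, mul_one, ← mul_assoc] using
    stmt11_general 1 ρ f g (.of_contDiff (contDiff_infty.1 hf 2))
      (.of_contDiff (contDiff_infty.1 hg 2)) hfne hsym hbil1
      (by simpa [hirotaDSq_self] using hbil2) q (by simpa [mul_assoc] using hq)
end

section
/- Let N ≥ 1 and let p₁,…,p_{2N}, c₁,…,c_{2N} be complex numbers and ξ_{01},…,ξ_{0,2N} real numbers such that for j = 1,…,N: p_{N+j} = −pⱼ, c_{N+j} = −conj(cⱼ), ξ_{0,N+j} = ξ_{0j}; assume pᵢ + conj(pⱼ) ≠ 0 for all 1 ≤ i, j ≤ 2N. For (x,t) ∈ ℝ² set Eᵢ(x,t) = (pᵢ + conj(pᵢ))x − i(pᵢ² − conj(pᵢ)²)t + ξ_{0i} and define f(x,t) = det(F(x,t)) where F(x,t) is the 2N×2N matrix with entries F_{ij} = cᵢδ_{ij}·e^{−Eᵢ(x,t)} + 1/(pᵢ + conj(pⱼ)). Then for all (x,t): f(x,t) = conj(f(−x,t)). -/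
open Complex Matrix ComplexConjugate

/-- `Eᵢ(x,t) = (pᵢ + pᵢ*)x - i(pᵢ² - (pᵢ*)²)t + ξ_{0i}`. -/
noncomputable def Efun (N : ℕ) (p : Fin (N + N) → ℂ) (ξ0 : Fin (N + N) → ℝ)
    (i : Fin (N + N)) (x t : ℝ) : ℂ :=
  (p i + conj (p i)) * (x : ℂ)
    - Complex.I * ((p i) ^ 2 - (conj (p i)) ^ 2) * (t : ℂ) + (ξ0 i : ℂ)

/-- `f(x,t) = det(cᵢδ_{ij} e^{-Eᵢ} + 1/(pᵢ + pⱼ*))` (a `2N×2N` determinant). -/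
noncomputable def fGram (N : ℕ) (p c : Fin (N + N) → ℂ) (ξ0 : Fin (N + N) → ℝ)
    (x t : ℝ) : ℂ :=
  Matrix.det (Matrix.of fun i j : Fin (N + N) =>
    (if i = j then c i * Complex.exp (-(Efun N p ξ0 i x t)) else 0)
      + 1 / (p i + conj (p j)))

/-!
Negating the spectral parameters negates the Cauchy part `1 / (pᵢ + p̄ⱼ)`, while conjugate
transposition fixes it and conjugates the diagonal. The swap `j ↔ N + j` together with
`x ↦ -x` is arranged so that the permuted diagonal is minus the conjugate of the original one.
Hence the permuted Gram matrix at `x` is minus the conjugate transpose of the one at `-x`, and the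
sign disappears from the determinant because the size `2N` is even.
-/

/-- The matrix `dᵢδᵢⱼ + 1 / (pᵢ + p̄ⱼ)` whose determinant is a Gram-type tau function of the KP
hierarchy with complex conjugate spectral parameters. The exponentials and the constants `cᵢ` are
absorbed into the diagonal `d`. -/
def gramTauMatrix {n K : Type*} [DecidableEq n] [DivisionRing K] [StarRing K] (d p : n → K) :
    Matrix n n K :=
  diagonal d + of fun i j => 1 / (p i + star (p j))

section GramTauMatrix

variable {m n K : Type*} [DecidableEq m] [DecidableEq n]

section DivisionRing

variable [DivisionRing K] [StarRing K]

theorem gramTauMatrix_neg (d p : n → K) : gramTauMatrix (-d) (-p) = -gramTauMatrix d p := by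
  rw [gramTauMatrix, gramTauMatrix, neg_add, diagonal_neg]
  congr 1
  ext i j
  rw [of_apply, neg_apply, of_apply, Pi.neg_apply, Pi.neg_apply, star_neg, ← neg_add,
    one_div_neg_eq_neg_one_div]

theorem conjTranspose_gramTauMatrix (d p : n → K) :
    (gramTauMatrix d p)ᴴ = gramTauMatrix (star d) p := by
  rw [gramTauMatrix, conjTranspose_add, diagonal_conjTranspose, gramTauMatrix]
  congr 1
  ext i j
  simp [add_comm]

theorem gramTauMatrix_submatrix (d p : n → K) {e : m → n} (he : e.Injective) :
    (gramTauMatrix d p).submatrix e e = gramTauMatrix (d ∘ e) (p ∘ e) := by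
  rw [gramTauMatrix, submatrix_add, Pi.add_apply, Pi.add_apply, submatrix_diagonal d e he]
  rfl

end DivisionRing

theorem det_gramTauMatrix_eq_star_of_perm [Field K] [StarRing K] [Fintype n] {d d' p : n → K}
    (σ : Equiv.Perm n) (hp : ∀ i, p (σ i) = -p i) (hd : ∀ i, d' (σ i) = -star (d i)) :
    (gramTauMatrix d' p).det = (-1) ^ Fintype.card n * star (gramTauMatrix d p).det :=
  calc
    (gramTauMatrix d' p).det = (gramTauMatrix (d' ∘ σ) (p ∘ σ)).det := by
      rw [← det_submatrix_equiv_self σ, gramTauMatrix_submatrix _ _ σ.injective]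
    _ = (-(gramTauMatrix d p)ᴴ).det := by
      rw [conjTranspose_gramTauMatrix, ← gramTauMatrix_neg,
        show p ∘ σ = -p from funext hp, show d' ∘ σ = -star d from funext hd]
    _ = (-1) ^ Fintype.card n * star (gramTauMatrix d p).det := by
      rw [det_neg, det_conjTranspose]

end GramTauMatrix

theorem apply_finAddFlip_of_involutive {α : Type*} {n : ℕ} {f : Fin (n + n) → α} {g : α → α}
    (hg : g.Involutive) (hf : ∀ j : Fin n, f (j.addNat n) = g (f (j.castAdd n)))
    (i : Fin (n + n)) : f (finAddFlip i) = g (f i) := by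
  simp only [← Fin.natAdd_eq_addNat] at hf
  induction i using Fin.addCases with
  | left j => rw [finAddFlip_apply_castAdd, hf]
  | right j => rw [finAddFlip_apply_natAdd, hf, hg]

section SolitonPhase

variable {N : ℕ} {p : Fin (N + N) → ℂ} {ξ0 : Fin (N + N) → ℝ}

theorem Efun_eq_conj_Efun_neg {i k : Fin (N + N)} (hp : p k = -p i) (hξ : ξ0 k = ξ0 i)
    (x t : ℝ) : Efun N p ξ0 k x t = conj (Efun N p ξ0 i (-x) t) := by
  simp only [Efun, hp, hξ, map_add, map_sub, map_mul, map_pow, map_neg, conj_conj, conj_ofReal,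
    conj_I, ofReal_neg]
  ring

theorem mul_exp_neg_Efun_eq_neg_conj {c : Fin (N + N) → ℂ} {i k : Fin (N + N)}
    (hp : p k = -p i) (hc : c k = -conj (c i)) (hξ : ξ0 k = ξ0 i) (x t : ℝ) :
    c k * exp (-Efun N p ξ0 k x t) = -conj (c i * exp (-Efun N p ξ0 i (-x) t)) := by
  rw [hc, Efun_eq_conj_Efun_neg hp hξ, map_mul, ← exp_conj, map_neg, neg_mul]

theorem fGram_eq_det_gramTauMatrix (c : Fin (N + N) → ℂ) (x t : ℝ) :
    fGram N p c ξ0 x t = (gramTauMatrix (fun i => c i * exp (-Efun N p ξ0 i x t)) p).det :=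
  rfl

end SolitonPhase

/-- symmetry lemma for σ = 1, nonzero boundary conditions, `f`-part:
with `p_{N+j} = -pⱼ`, `c_{N+j} = -cⱼ*`, `ξ_{0,N+j} = ξ_{0j}` and `pᵢ + pⱼ* ≠ 0`,
`f(x,t) = conj (f(-x,t))` for all `(x,t)`. -/
theorem stmt13 (N : ℕ) (hN : 1 ≤ N) (p c : Fin (N + N) → ℂ) (ξ0 : Fin (N + N) → ℝ)
    (hpc : ∀ j : Fin N, p (j.addNat N) = -p (j.castAdd N))
    (hcc : ∀ j : Fin N, c (j.addNat N) = -conj (c (j.castAdd N)))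
    (hξ : ∀ j : Fin N, ξ0 (j.addNat N) = ξ0 (j.castAdd N))
    (hp : ∀ i j, p i + conj (p j) ≠ 0) :
    ∀ x t : ℝ, fGram N p c ξ0 x t = conj (fGram N p c ξ0 (-x) t) := by
  intro x t
  have p_flip := apply_finAddFlip_of_involutive neg_involutive hpc
  have c_flip := apply_finAddFlip_of_involutive (g := fun z => -conj z) (fun z => by simp) hcc
  have ξ0_flip := apply_finAddFlip_of_involutive (g := id) (fun _ => rfl) hξ
  have diag_flip (i : Fin (N + N)) :=
    mul_exp_neg_Efun_eq_neg_conj (p_flip i) (c_flip i) (ξ0_flip i) x t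
  rw [fGram_eq_det_gramTauMatrix, fGram_eq_det_gramTauMatrix,
    det_gramTauMatrix_eq_star_of_perm finAddFlip p_flip diag_flip, Fintype.card_fin,
    Even.neg_one_pow ⟨N, rfl⟩, one_mul, starRingEnd_apply]
end

section
/- Let ρ > 0. Then the function q(x,t) := ρ·exp(2iρ²t)·tanh(ρx) satisfies the focusing nonlocal NLS equation i·∂ₜq(x,t) = ∂ₓ²q(x,t) + 2·conj(q(−x,t))·q(x,t)² for all (x,t) ∈ ℝ². -/
open Complex ComplexConjugate

/-!
For a standing wave `q(x,t) = e^{iωt} f(x)` the phases in `conj (q(-x,t)) * q(x,t)²` combine to a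
single `e^{iωt}`, so the nonlocal NLS equation reduces to an ODE for `f`. When
`conj (f(-x)) = -f(x)` and `σ = -1`, this ODE is `f'' = 2f³ - ωf`, which follows by differentiating
the Riccati equation `f' = a - f²` with `ω = 2a`. The profile `f(x) = ρ tanh(ρx)` solves the latter
with `a = ρ²`.
-/

theorem hasDerivAt_complex_tanh {z : ℂ} (hz : cosh z ≠ 0) : HasDerivAt tanh (1 - tanh z ^ 2) z := by
  have quotient := (hasDerivAt_sinh z).fun_div (hasDerivAt_cosh z) hz
  simp only [← tanh_eq_sinh_div_cosh] at quotient
  refine quotient.congr_deriv ?_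
  rw [tanh_eq_sinh_div_cosh]
  field_simp

theorem hasDerivAt_mul_tanh_mul {k z : ℂ} (hz : cosh (k * z) ≠ 0) :
    HasDerivAt (fun w => k * tanh (k * w)) (k ^ 2 - (k * tanh (k * z)) ^ 2) z := by
  have inner : HasDerivAt (fun w => k * w) k z := by
    simpa using (hasDerivAt_id z).const_mul k
  refine (((hasDerivAt_complex_tanh hz).comp z inner).const_mul k).congr_deriv ?_
  ring

theorem deriv_deriv_of_riccati {𝕜 𝔸 : Type*} [NontriviallyNormedField 𝕜] [NormedCommRing 𝔸]
    [NormedAlgebra 𝕜 𝔸] {f : 𝕜 → 𝔸} {a : 𝔸} (hf : ∀ x, HasDerivAt f (a - f x ^ 2) x) (x : 𝕜) :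
    deriv (deriv f) x = 2 * f x ^ 3 - 2 * a * f x := by
  have deriv_eq : deriv f = fun y => a - f y ^ 2 := funext fun y => (hf y).deriv
  rw [deriv_eq, (((hf x).fun_pow 2).const_sub a).deriv]
  push_cast
  ring

/-- The nonlocal nonlinear Schrödinger equation `i q_t = q_xx - 2σ conj(q(-x,t)) q²`, with
`σ = 1` the defocusing and `σ = -1` the focusing case. Derivatives are taken with `deriv`, which is
`0` where `q` is not differentiable. -/
def IsNonlocalNLSSolution (σ : ℝ) (q : ℝ → ℝ → ℂ) : Prop :=
  ∀ x t : ℝ, I * deriv (fun t' => q x t') t =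
    deriv (deriv fun x' => q x' t) x - 2 * σ * conj (q (-x) t) * q x t ^ 2

/-- The standing wave `e^{iωt} f(x)` with frequency `ω` and complex profile `f`, which separates
the time dependence of the nonlocal NLS equation from the space dependence. -/
noncomputable def standingWave (ω : ℝ) (f : ℝ → ℂ) (x t : ℝ) : ℂ :=
  exp (ω * t * I) * f x

section StandingWave

variable (ω : ℝ) (f : ℝ → ℂ) (x t : ℝ)

theorem deriv_standingWave_time :
    deriv (fun t' => standingWave ω f x t') t = ω * I * standingWave ω f x t := by
  have phase : HasDerivAt (fun s : ℝ => (ω * s * I : ℂ)) (ω * I) t := by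
    simpa using ((hasDerivAt_id t).ofReal_comp.const_mul (ω : ℂ)).mul_const I
  rw [show standingWave ω f x = fun s : ℝ => exp (ω * s * I) * f x from rfl,
    (phase.cexp.mul_const (f x)).deriv]
  ring

theorem deriv_deriv_standingWave_space :
    deriv (deriv fun x' => standingWave ω f x' t) x = exp (ω * t * I) * deriv (deriv f) x := by
  simp only [standingWave, deriv_const_mul_field']

theorem conj_standingWave_mul_sq (y : ℝ) :
    conj (standingWave ω f y t) * standingWave ω f x t ^ 2 =
      exp (ω * t * I) * (conj (f y) * f x ^ 2) := by
  have phase_cancel : conj (exp (ω * t * I)) * exp (ω * t * I) = 1 := by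
    rw [conj_mul', ← ofReal_mul, norm_exp_ofReal_mul_I]
    norm_num
  simp only [standingWave, map_mul]
  linear_combination (conj (f y) * exp (ω * t * I) * f x ^ 2) * phase_cancel

end StandingWave

theorem isNonlocalNLSSolution_standingWave_iff {σ ω : ℝ} {f : ℝ → ℂ} :
    IsNonlocalNLSSolution σ (standingWave ω f) ↔
      ∀ x, deriv (deriv f) x = 2 * σ * (conj (f (-x)) * f x ^ 2) - ω * f x := by
  have factor_phase (x t : ℝ) :
      I * deriv (fun t' => standingWave ω f x t') t =
          deriv (deriv fun x' => standingWave ω f x' t) x -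
            2 * σ * conj (standingWave ω f (-x) t) * standingWave ω f x t ^ 2 ↔
        exp (ω * t * I) * deriv (deriv f) x =
          exp (ω * t * I) * (2 * σ * (conj (f (-x)) * f x ^ 2) - ω * f x) := by
    rw [deriv_standingWave_time, deriv_deriv_standingWave_space, mul_assoc (2 * (σ : ℂ)),
      conj_standingWave_mul_sq, standingWave]
    constructor <;> intro h <;> linear_combination -h + ω * exp (ω * t * I) * f x * I_sq
  simp only [IsNonlocalNLSSolution, factor_phase, mul_right_inj' (exp_ne_zero _), forall_const]

theorem isNonlocalNLSSolution_standingWave_of_riccati {a : ℝ} {f : ℝ → ℂ}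
    (hf : ∀ x, HasDerivAt f (a - f x ^ 2) x) (hodd : ∀ x, conj (f (-x)) = -f x) :
    IsNonlocalNLSSolution (-1) (standingWave (2 * a) f) := by
  refine isNonlocalNLSSolution_standingWave_iff.2 fun x => ?_
  rw [deriv_deriv_of_riccati hf, hodd]
  push_cast
  ring

theorem isNonlocalNLSSolution_standingWave_tanh (ρ : ℝ) :
    IsNonlocalNLSSolution (-1) (standingWave (2 * ρ ^ 2) fun x => ρ * tanh (ρ * x)) := by
  refine isNonlocalNLSSolution_standingWave_of_riccati (fun x => ?_) fun x => ?_
  · have cosh_ne_zero : cosh (ρ * x : ℂ) ≠ 0 := by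
      exact_mod_cast (Real.cosh_pos (ρ * x)).ne'
    simpa using (hasDerivAt_mul_tanh_mul cosh_ne_zero).comp_ofReal
  · simp [← tanh_conj]

/-- the stationary one-soliton `q(x,t) = ρ e^{2iρ²t} tanh(ρx)` satisfies
the focusing nonlocal NLS equation `i qₜ = q_xx + 2 q*(-x,t) q²`. -/
theorem stmt17 (ρ : ℝ) (hρ : 0 < ρ)
    (q : ℝ → ℝ → ℂ)
    (hq : ∀ x t : ℝ,
      q x t = (ρ : ℂ) * Complex.exp (2 * Complex.I * (ρ : ℂ) ^ 2 * (t : ℂ))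
        * (Real.tanh (ρ * x) : ℂ)) :
    ∀ x t : ℝ,
      Complex.I * deriv (fun t' => q x t') t
        = deriv (deriv (fun x' => q x' t)) x
          + 2 * conj (q (-x) t) * (q x t) ^ 2 := by
  have q_eq : q = standingWave (2 * ρ ^ 2) fun x => ρ * tanh (ρ * x) := by
    funext x t
    rw [hq, standingWave]
    push_cast
    ring_nf
  simpa [IsNonlocalNLSSolution, q_eq] using isNonlocalNLSSolution_standingWave_tanh ρ
end
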